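/- arXiv:1609.04002 — 7 statements merged into one kernel-verified Lean document; each statement's English description precedes it below -/
import Mathlib

section
/- Let 𝔞, 𝔡 be nonzero integral ideals of O_K, γ ∈ O_K and 1 ≤ i ≤ 2m. If [𝔞] = [𝔯_q] for some 1 ≤ q ≤ h, then 𝔑𝔞^{1/m}·λ^{(i)}(𝔯_q, 𝔯_q𝔡(𝔞+𝔡)^{−1}, γ) ≪ λ^{(i)}(𝔞,𝔡,γ) ≪ 𝔑𝔞^{1/m}·λ^{(i)}(𝔯_q, 𝔯_q𝔡(𝔞+𝔡)^{−1}, γ), with implicit constants depending only on K and the chosen class representatives. -/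
/-!
Write `𝔠 = 𝔡(𝔞+𝔡)⁻¹`, so that `𝔞 ∩ 𝔡 = 𝔞𝔠`. If `s, t ∈ 𝔞`, the condition `s ≡ γt mod 𝔡` only
concerns `s - γt ∈ 𝔞 ∩ 𝔡`, hence `Λ(𝔞,𝔡,γ) = Λ(𝔞,𝔞𝔠,γ)` (`idealLattice_eq_mul`). If
`x𝔞 = y𝔯`, then for every unit `u` multiplication by `β = uy/x` maps `Λ(𝔯,𝔯𝔠,γ)` bijectively onto
`Λ(𝔞,𝔞𝔠,γ)` (`mul_mem_idealLattice`, applied in both directions).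

Successive minima grow under multiplication by `β` at most by the factor `‖β‖`, the largest absolute
value of `β` at an infinite place (`succMin_le_mul`). By Dirichlet's unit theorem, in the form that
the elements of norm at most `1` of the fundamental cone are bounded, `u` can be chosen so that all
archimedean absolute values of `β` are comparable to `|N(β)|^{1/m}` (`exists_unit_balanced`), and
`|N(β)| = 𝔑𝔞 / 𝔑𝔯` (`absNorm_eq_of_class_eq`). As there are finitely many representatives `𝔯`, the
factor `𝔑𝔯^{1/m}` is absorbed in the constants.
-/


open NumberField Classical

noncomputable section

variable (K : Type*) [Field K] [NumberField K]

/-- `K_∞ = K ⊗_ℚ ℝ`, identified with the mixed space `ℝ^{r₁} × ℂ^{r₂} ≅ ℝ^m`. -/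
abbrev KInfty := NumberField.mixedEmbedding.mixedSpace K

/-- The embedding `O_K → K_∞`. -/
def iota (s : 𝓞 K) : KInfty K := mixedEmbedding K (algebraMap (𝓞 K) K s)

/-- The lattice `Λ(𝔞,𝔡,γ) = {(s,t) ∈ 𝔞² : s ≡ γt mod 𝔡}`, viewed inside
`K_∞² ≅ ℝ^{2m}`. -/
def idealLattice (a d : Ideal (𝓞 K)) (γ : 𝓞 K) : Set (KInfty K × KInfty K) :=
  {v | ∃ s t : 𝓞 K, s ∈ a ∧ t ∈ a ∧ s - γ * t ∈ d ∧ v = (iota K s, iota K t)}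

/-- The `i`-th successive minimum of a subset `Λ ⊆ K_∞²` (with respect to the unit ball):
the infimum of all `r > 0` such that `Λ` contains `i` linearly independent vectors of norm
at most `r`. -/
def succMin (Λ : Set (KInfty K × KInfty K)) (i : ℕ) : ℝ :=
  sInf {r : ℝ | 0 < r ∧ ∃ v : Fin i → KInfty K × KInfty K,
    (∀ j, v j ∈ Λ) ∧ LinearIndependent ℝ v ∧ ∀ j, ‖v j‖ ≤ r}

end

section Auxiliary

open NumberField.InfinitePlace Module
open NumberField.mixedEmbedding hiding idealLattice

/-- In a product of `1`, factors bounded by `R` are bounded below: since the exponents sum to the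
degree `m`, one has `1 ≤ z w * R ^ m`. -/
theorem one_le_mul_pow_of_prod_eq_one (K : Type*) [Field K] [NumberField K] {R : ℝ} (hR : 1 ≤ R)
    (z : InfinitePlace K → ℝ) (hz0 : ∀ w, 0 ≤ z w) (hz : ∀ w, z w ≤ R)
    (hprod : ∏ w, z w ^ mult w = 1) (w : InfinitePlace K) :
    1 ≤ z w * R ^ finrank ℚ K := by
  have hR0 : (0 : ℝ) ≤ R := zero_le_one.trans hR
  rw [← hprod, ← sum_mult_eq, ← Finset.prod_pow_eq_pow_sum,
    ← Finset.mul_prod_erase _ _ (Finset.mem_univ w),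
    ← Finset.mul_prod_erase _ (fun w => R ^ mult w) (Finset.mem_univ w), ← mul_assoc]
  refine mul_le_mul ?_ ?_ (Finset.prod_nonneg fun v _ => pow_nonneg (hz0 v) _) (by
    have := hz0 w; positivity)
  · obtain ⟨k, hk⟩ : ∃ k, mult w = k + 1 := Nat.exists_eq_succ_of_ne_zero mult_ne_zero
    rw [hk, pow_succ']
    refine mul_le_mul_of_nonneg_left ?_ (hz0 w)
    calc z w ^ k ≤ R ^ k := pow_le_pow_left₀ (hz0 w) (hz w) k
      _ ≤ R ^ (k + 1) := pow_le_pow_right₀ hR (Nat.le_succ k)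
  · exact Finset.prod_le_prod (fun v _ => pow_nonneg (hz0 v) _)
      fun v _ => pow_le_pow_left₀ (hz0 v) (hz v) _

theorem norm_mixedSpace_le_iff (K : Type*) [Field K] [NumberField K] (x : KInfty K) (r : ℝ) :
    ‖x‖ ≤ r ↔ ∀ w, normAtPlace w x ≤ r := by
  rw [norm_eq_sup'_normAtPlace]
  simp

/-- Every nonzero `α` has a unit multiple all of whose archimedean absolute values are comparable to
`|N(α)|^{1/m}`. -/
theorem exists_unit_balanced (K : Type*) [Field K] [NumberField K] :
    ∃ R : ℝ, 0 < R ∧ ∀ α : K, α ≠ 0 → ∃ u : (𝓞 K)ˣ,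
      ‖mixedEmbedding K ((u : K) * α)‖ ≤
        R * (|Algebra.norm ℚ α| : ℝ) ^ ((1 : ℝ) / finrank ℚ K) ∧
      ‖mixedEmbedding K ((u : K) * α)⁻¹‖ ≤
        R * ((|Algebra.norm ℚ α| : ℝ) ^ ((1 : ℝ) / finrank ℚ K))⁻¹ := by
  obtain ⟨R₀, hR₀⟩ := (fundamentalCone.isBounded_normLeOne K).exists_norm_le
  set R := max R₀ 1
  have hR1 : 1 ≤ R := le_max_right _ _
  have hm : finrank ℚ K ≠ 0 := finrank_pos.ne'
  refine ⟨R ^ finrank ℚ K, by positivity, fun α hα => ?_⟩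
  have hN : (0 : ℝ) < |((Algebra.norm ℚ α : ℚ) : ℝ)| := by
    rw [abs_pos]
    exact_mod_cast Algebra.norm_ne_zero_iff.mpr hα
  set N : ℝ := |((Algebra.norm ℚ α : ℚ) : ℝ)| with hNdef
  set n : ℝ := N ^ ((1 : ℝ) / finrank ℚ K) with hn
  have hn0 : 0 < n := Real.rpow_pos_of_pos hN _
  have hnpow : n ^ finrank ℚ K = N := by
    rw [hn, one_div, Real.rpow_inv_natCast_pow hN.le hm]
  have hnorm : mixedEmbedding.norm (mixedEmbedding K α) = N := by
    rw [norm_eq_norm, hNdef]; push_cast; rfl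
  obtain ⟨u, hu⟩ := fundamentalCone.exists_unit_smul_mem (x := mixedEmbedding K α)
    (by rw [hnorm]; exact hN.ne')
  rw [unitSMul_smul, ← map_mul] at hu
  set β : K := (u : K) * α
  have hβnorm : mixedEmbedding.norm (mixedEmbedding K β) = N := by
    rw [map_mul, map_mul, norm_unit, one_mul, hnorm]
  -- Rescaled to norm one, the conjugates of `β` form a point of the bounded set `normLeOne`.
  have hone : mixedEmbedding.norm (n⁻¹ • mixedEmbedding K β) = 1 := by
    rw [mixedEmbedding.norm_smul, hβnorm, abs_of_pos (inv_pos.mpr hn0), inv_pow, hnpow,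
      inv_mul_cancel₀ hN.ne']
  have hbd : ‖n⁻¹ • mixedEmbedding K β‖ ≤ R :=
    (hR₀ _ (fundamentalCone.mem_normLeOne.mpr
      ⟨fundamentalCone.smul_mem_of_mem hu (inv_ne_zero hn0.ne'), hone.le⟩)).trans (le_max_left _ _)
  have hz : ∀ w, normAtPlace w (n⁻¹ • mixedEmbedding K β) = n⁻¹ * w β := fun w => by
    rw [normAtPlace_smul, normAtPlace_apply, abs_of_pos (inv_pos.mpr hn0)]
  have hzle : ∀ w : InfinitePlace K, n⁻¹ * w β ≤ R := fun w =>
    hz w ▸ (norm_mixedSpace_le_iff K _ _).mp hbd w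
  have hz0 : ∀ w : InfinitePlace K, 0 ≤ n⁻¹ * w β := fun w => by positivity
  have hge := one_le_mul_pow_of_prod_eq_one K hR1 (fun w => n⁻¹ * w β) hz0 hzle
    (by rw [← hone, mixedEmbedding.norm_apply]; simp_rw [hz])
  refine ⟨u, ?_, ?_⟩
  · rw [norm_mixedSpace_le_iff]
    intro w
    rw [normAtPlace_apply]
    have h1 := (hzle w).trans (le_self_pow₀ hR1 hm)
    rwa [inv_mul_le_iff₀ hn0, mul_comm] at h1
  · rw [norm_mixedSpace_le_iff]
    intro w
    rw [normAtPlace_apply, map_inv₀]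
    have hwβ : 0 < w β := by
      rw [InfinitePlace.pos_iff]
      exact mul_ne_zero (by simp) hα
    have h1 := hge w
    rw [inv_le_iff_one_le_mul₀ hwβ]
    calc 1 ≤ _ := h1
      _ = _ := by ring

/-- If multiplication by `β` is a bijection from `Λ₁` to `Λ₂`, the successive minima of `Λ₂` are at
most `‖β‖` times those of `Λ₁`. The inverse map guarantees that both sets of admissible radii are
empty at the same time, so that the convention `sInf ∅ = 0` is harmless. -/
theorem succMin_le_mul (K : Type*) [Field K] [NumberField K] {β : K} (hβ : β ≠ 0)
    {Λ₁ Λ₂ : Set (KInfty K × KInfty K)}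
    (h₁ : ∀ p ∈ Λ₁, (mixedEmbedding K β, mixedEmbedding K β) * p ∈ Λ₂)
    (h₂ : ∀ p ∈ Λ₂, (mixedEmbedding K β⁻¹, mixedEmbedding K β⁻¹) * p ∈ Λ₁)
    {B : ℝ} (hB0 : 0 < B) (hB : ‖mixedEmbedding K β‖ ≤ B) (i : ℕ) :
    succMin K Λ₂ i ≤ B * succMin K Λ₁ i := by
  -- Multiplication by a nonzero `δ` transports radii, with any factor at least `‖δ‖`.
  have key : ∀ (δ : K) (Λ Λ' : Set (KInfty K × KInfty K)) (D : ℝ), δ ≠ 0 → 0 < D →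
      ‖mixedEmbedding K δ‖ ≤ D →
      (∀ p ∈ Λ, (mixedEmbedding K δ, mixedEmbedding K δ) * p ∈ Λ') →
      ∀ r ∈ {r : ℝ | 0 < r ∧ ∃ v : Fin i → KInfty K × KInfty K,
        (∀ j, v j ∈ Λ) ∧ LinearIndependent ℝ v ∧ ∀ j, ‖v j‖ ≤ r},
      D * r ∈ {r : ℝ | 0 < r ∧ ∃ v : Fin i → KInfty K × KInfty K,
        (∀ j, v j ∈ Λ') ∧ LinearIndependent ℝ v ∧ ∀ j, ‖v j‖ ≤ r} := by
    rintro δ Λ Λ' D hδ hD0 hD hmap r ⟨hr, v, hv, hli, hle⟩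
    refine ⟨mul_pos hD0 hr, fun j => (mixedEmbedding K δ, mixedEmbedding K δ) * v j,
      fun j => hmap _ (hv j), ?_, fun j => ?_⟩
    · refine hli.map' (LinearMap.mulLeft ℝ (mixedEmbedding K δ, mixedEmbedding K δ)) ?_
      rw [LinearMap.ker_eq_bot]
      refine Function.LeftInverse.injective
        (g := fun p => (mixedEmbedding K δ⁻¹, mixedEmbedding K δ⁻¹) * p) fun p => ?_
      show (mixedEmbedding K δ⁻¹, mixedEmbedding K δ⁻¹) *
        ((mixedEmbedding K δ, mixedEmbedding K δ) * p) = p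
      have hinv : mixedEmbedding K δ⁻¹ * mixedEmbedding K δ = 1 := by
        rw [← map_mul, inv_mul_cancel₀ hδ, map_one]
      ext1
      · exact (mul_assoc _ _ _).symm.trans (by rw [hinv, one_mul])
      · exact (mul_assoc _ _ _).symm.trans (by rw [hinv, one_mul])
    · refine (norm_mul_le _ _).trans (mul_le_mul ?_ (hle j) (norm_nonneg _) hD0.le)
      rw [Prod.norm_mk, max_self]
      exact hD
  have hbdd : ∀ Λ : Set (KInfty K × KInfty K), BddBelow {r : ℝ | 0 < r ∧
      ∃ v : Fin i → KInfty K × KInfty K,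
        (∀ j, v j ∈ Λ) ∧ LinearIndependent ℝ v ∧ ∀ j, ‖v j‖ ≤ r} :=
    fun Λ => ⟨0, fun r hr => hr.1.le⟩
  unfold succMin
  rcases Set.eq_empty_or_nonempty {r : ℝ | 0 < r ∧ ∃ v : Fin i → KInfty K × KInfty K,
        (∀ j, v j ∈ Λ₁) ∧ LinearIndependent ℝ v ∧ ∀ j, ‖v j‖ ≤ r} with he | hne
  · have he' : {r : ℝ | 0 < r ∧ ∃ v : Fin i → KInfty K × KInfty K,
        (∀ j, v j ∈ Λ₂) ∧ LinearIndependent ℝ v ∧ ∀ j, ‖v j‖ ≤ r} = ∅ := by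
      rw [Set.eq_empty_iff_forall_notMem] at he ⊢
      intro r hr
      exact he _ (key β⁻¹ Λ₂ Λ₁ (‖mixedEmbedding K β⁻¹‖ + 1) (inv_ne_zero hβ) (by positivity)
        (by linarith) h₂ r hr)
    rw [he, he', Real.sInf_empty, mul_zero]
  · rw [← div_le_iff₀' hB0]
    refine le_csInf hne fun r hr => ?_
    rw [div_le_iff₀' hB0]
    exact csInf_le (hbdd Λ₂) (key β Λ₁ Λ₂ B hβ hB0 hB h₁ r hr)

/-- The congruence modulo `𝔡` may be replaced by the congruence modulo `𝔞𝔠 = 𝔞 ∩ 𝔡`. -/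
theorem idealLattice_eq_mul (K : Type*) [Field K] [NumberField K] {a d c : Ideal (𝓞 K)}
    (ha : a ≠ ⊥) (hc : (a ⊔ d) * c = d) (γ : 𝓞 K) :
    idealLattice K a d γ = idealLattice K a (a * c) γ := by
  have hinf : a * c = a ⊓ d := by
    have h0 : a ⊔ d ≠ 0 := fun h0 => ha (eq_bot_iff.mpr (le_sup_left.trans h0.le))
    refine mul_left_cancel₀ h0 ?_
    rw [Ideal.sup_mul_inf, mul_left_comm, hc]
  ext v
  rw [hinf]
  constructor
  · rintro ⟨s, t, hs, ht, hst, rfl⟩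
    exact ⟨s, t, hs, ht, ⟨a.sub_mem hs (a.mul_mem_left _ ht), hst⟩, rfl⟩
  · rintro ⟨s, t, hs, ht, hst, rfl⟩
    exact ⟨s, t, hs, ht, hst.2, rfl⟩

/-- If `x𝔞 = y𝔯` then multiplication by `uy/x` maps `Λ(𝔯,𝔯𝔠,γ)` into `Λ(𝔞,𝔞𝔠,γ)`. -/
theorem mul_mem_idealLattice (K : Type*) [Field K] [NumberField K] {a r : Ideal (𝓞 K)}
    {x y : 𝓞 K} (hx : x ≠ 0) (hxy : Ideal.span {x} * a = Ideal.span {y} * r) (u : (𝓞 K)ˣ)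
    (c : Ideal (𝓞 K)) (γ : 𝓞 K) {β : K} (hβ : β = (u : K) * ((y : K) / (x : K)))
    (p : KInfty K × KInfty K) (hp : p ∈ idealLattice K r (r * c) γ) :
    (mixedEmbedding K β, mixedEmbedding K β) * p ∈ idealLattice K a (a * c) γ := by
  have hxK : (x : K) ≠ 0 := by simpa using hx
  have hdiv : ∀ s ∈ r, ∃ s' ∈ a, x * s' = y * s := fun s hs => by
    have : y * s ∈ Ideal.span {x} * a := by
      rw [hxy]; exact Ideal.mul_mem_mul (Ideal.mem_span_singleton_self y) hs
    exact Ideal.mem_span_singleton_mul.mp this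
  have hiota : ∀ s s' : 𝓞 K, x * s' = y * s →
      mixedEmbedding K β * iota K s = iota K (u * s') := fun s s' h => by
    rw [iota, iota, ← map_mul]
    congr 1
    have h' : (x : K) * s' = y * s := by exact_mod_cast congrArg (algebraMap (𝓞 K) K) h
    rw [hβ, map_mul]
    field_simp
    linear_combination -h'
  obtain ⟨s, t, hs, ht, hst, rfl⟩ := hp
  obtain ⟨s', hs', hss⟩ := hdiv s hs
  obtain ⟨t', ht', htt⟩ := hdiv t ht
  refine ⟨u * s', u * t', a.mul_mem_left _ hs', a.mul_mem_left _ ht', ?_, ?_⟩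
  · have hmem : y * (s - γ * t) ∈ Ideal.span {x} * (a * c) := by
      rw [← mul_assoc, hxy, mul_assoc]
      exact Ideal.mul_mem_mul (Ideal.mem_span_singleton_self y) hst
    obtain ⟨e, he, hxe⟩ := Ideal.mem_span_singleton_mul.mp hmem
    have : s' - γ * t' = e := mul_left_cancel₀ hx (by linear_combination hss - γ * htt - hxe)
    have h2 : (u : 𝓞 K) * s' - γ * (u * t') = u * e := by rw [← this]; ring
    rw [h2]
    exact Ideal.mul_mem_left _ _ he
  · rw [Prod.mk_mul_mk, hiota s s' hss, hiota t t' htt]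

theorem absNorm_eq_of_class_eq (K : Type*) [Field K] [NumberField K] {a r : Ideal (𝓞 K)}
    {x y : 𝓞 K} (hx : x ≠ 0) (hxy : Ideal.span {x} * a = Ideal.span {y} * r) :
    (Ideal.absNorm a : ℝ) =
      |((Algebra.norm ℚ ((y : K) / (x : K)) : ℚ) : ℝ)| * Ideal.absNorm r := by
  have hspan : ∀ z : 𝓞 K, (Ideal.absNorm (Ideal.span {z}) : ℝ) =
      |((Algebra.norm ℚ (z : K) : ℚ) : ℝ)| := fun z => by
    rw [Ideal.absNorm_span_singleton, ← Algebra.coe_norm_int, Nat.cast_natAbs]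
    push_cast
    rfl
  have hN : |((Algebra.norm ℚ (x : K) : ℚ) : ℝ)| ≠ 0 := by
    rw [abs_ne_zero]
    exact_mod_cast Algebra.norm_ne_zero_iff.mpr (show (x : K) ≠ 0 by simpa using hx)
  have h := congrArg (fun I => (Ideal.absNorm I : ℝ)) hxy
  simp only [map_mul, Nat.cast_mul, hspan] at h
  have hxK : (x : K) ≠ 0 := by simpa using hx
  have hy : |((Algebra.norm ℚ (y : K) : ℚ) : ℝ)| =
      |((Algebra.norm ℚ ((y : K) / (x : K)) : ℚ) : ℝ)| * |((Algebra.norm ℚ (x : K) : ℚ) : ℝ)| := by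
    rw [← abs_mul, ← Rat.cast_mul, ← map_mul, div_mul_cancel₀ _ hxK]
  rw [hy] at h
  exact mul_left_cancel₀ hN (by rw [h]; ring)

end Auxiliary

/-- **Lemma 2.1(1).** Let `C = {𝔯_1,…,𝔯_h}` be a fixed system of nonzero integral
representatives of the ideal class group. For `[𝔞] = [𝔯_q]` (i.e. `x𝔞 = y𝔯_q` for some
nonzero `x, y ∈ O_K`) one has
`𝔑𝔞^{1/m} λ^{(i)}(𝔯_q, 𝔯_q𝔡(𝔞+𝔡)^{−1}, γ) ≪ λ^{(i)}(𝔞,𝔡,γ)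
  ≪ 𝔑𝔞^{1/m} λ^{(i)}(𝔯_q, 𝔯_q𝔡(𝔞+𝔡)^{−1}, γ)`,
for all nonzero ideals `𝔞, 𝔡`, all `γ ∈ O_K` and all `1 ≤ i ≤ 2m`, with implicit
constants depending only on `K` and the representatives. Here `𝔡(𝔞+𝔡)^{−1}` is the
ideal `𝔠` with `(𝔞 ⊔ 𝔡)𝔠 = 𝔡`. -/
theorem successive_minima_class_representatives
    (K : Type*) [Field K] [NumberField K]
    (h : ℕ) (reps : Fin h → Ideal (𝓞 K)) (hreps : ∀ q, reps q ≠ ⊥) :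
    ∃ C₁ C₂ : ℝ, 0 < C₁ ∧ 0 < C₂ ∧
      ∀ (a d : Ideal (𝓞 K)), a ≠ ⊥ → d ≠ ⊥ → ∀ γ : 𝓞 K, ∀ q : Fin h,
        (∃ x y : 𝓞 K, x ≠ 0 ∧ y ≠ 0 ∧ Ideal.span {x} * a = Ideal.span {y} * reps q) →
        ∀ c : Ideal (𝓞 K), (a ⊔ d) * c = d →
          ∀ i : ℕ, 1 ≤ i → i ≤ 2 * Module.finrank ℚ K →
            C₁ * (Ideal.absNorm a : ℝ) ^ ((1 : ℝ) / (Module.finrank ℚ K)) *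
                succMin K (idealLattice K (reps q) (reps q * c) γ) i
              ≤ succMin K (idealLattice K a d γ) i ∧
            succMin K (idealLattice K a d γ) i ≤
              C₂ * (Ideal.absNorm a : ℝ) ^ ((1 : ℝ) / (Module.finrank ℚ K)) *
                succMin K (idealLattice K (reps q) (reps q * c) γ) i := by
  obtain ⟨R, hR, hbal⟩ := exists_unit_balanced K
  -- `M` dominates `𝔑𝔯^{1/m}` for all representatives `𝔯`.
  set M : ℝ := 1 + ∑ q, (Ideal.absNorm (reps q) : ℝ) ^ ((1 : ℝ) / (Module.finrank ℚ K)) with hM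
  have hM0 : 0 < M := by positivity
  refine ⟨(R * M)⁻¹, R, by positivity, hR, ?_⟩
  rintro a d ha hd γ q ⟨x, y, hx, hy, hxy⟩ c hc i - -
  have hxK : (x : K) ≠ 0 := by simpa using hx
  have hyK : (y : K) ≠ 0 := by simpa using hy
  obtain ⟨u, hu₁, hu₂⟩ := hbal ((y : K) / x) (div_ne_zero hyK hxK)
  have hnorm := absNorm_eq_of_class_eq K hx hxy
  set N : ℝ := |((Algebra.norm ℚ ((y : K) / (x : K)) : ℚ) : ℝ)|
  set β : K := (u : K) * ((y : K) / x) with hβ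
  have hβ0 : β ≠ 0 := mul_ne_zero (by simp) (div_ne_zero hyK hxK)
  have hr1 : (1 : ℝ) ≤ Ideal.absNorm (reps q) := by
    have : Ideal.absNorm (reps q) ≠ 0 := Ideal.absNorm_eq_zero_iff.not.mpr (hreps q)
    exact_mod_cast Nat.one_le_iff_ne_zero.mpr this
  have ha0 : (0 : ℝ) < Ideal.absNorm a := by
    have : Ideal.absNorm a ≠ 0 := Ideal.absNorm_eq_zero_iff.not.mpr ha
    exact_mod_cast Nat.pos_of_ne_zero this
  have hN0 : 0 < N := pos_of_mul_pos_left (hnorm ▸ ha0) (zero_le_one.trans hr1)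
  have he : (0 : ℝ) ≤ (1 : ℝ) / (Module.finrank ℚ K) := by positivity
  have hpow : (Ideal.absNorm a : ℝ) ^ ((1 : ℝ) / (Module.finrank ℚ K)) =
      N ^ ((1 : ℝ) / (Module.finrank ℚ K)) *
        (Ideal.absNorm (reps q) : ℝ) ^ ((1 : ℝ) / (Module.finrank ℚ K)) := by
    rw [hnorm, Real.mul_rpow hN0.le (zero_le_one.trans hr1)]
  have hrM : (Ideal.absNorm (reps q) : ℝ) ^ ((1 : ℝ) / (Module.finrank ℚ K)) ≤ M := by
    have := Finset.single_le_sum (s := Finset.univ)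
      (f := fun q => (Ideal.absNorm (reps q) : ℝ) ^ ((1 : ℝ) / (Module.finrank ℚ K)))
      (fun q _ => by positivity) (Finset.mem_univ q)
    linarith
  have hr1' : 1 ≤ (Ideal.absNorm (reps q) : ℝ) ^ ((1 : ℝ) / (Module.finrank ℚ K)) :=
    Real.one_le_rpow hr1 he
  have hn0 : 0 < N ^ ((1 : ℝ) / (Module.finrank ℚ K)) := Real.rpow_pos_of_pos hN0 _
  set n : ℝ := N ^ ((1 : ℝ) / (Module.finrank ℚ K))
  set ρ : ℝ := (Ideal.absNorm (reps q) : ℝ) ^ ((1 : ℝ) / (Module.finrank ℚ K))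
  rw [idealLattice_eq_mul K ha hc, hpow]
  have hforth := mul_mem_idealLattice K hx hxy u c γ hβ
  have hback := mul_mem_idealLattice K hy hxy.symm u⁻¹ c γ (β := β⁻¹)
    (by rw [hβ, mul_inv, inv_div]; simp)
  have hle₁ := succMin_le_mul K hβ0 hforth hback (by positivity) hu₁ i
  have hle₂ := succMin_le_mul K (inv_ne_zero hβ0) hback (by rwa [inv_inv]) (by positivity) hu₂ i
  have hpos : ∀ Λ, 0 ≤ succMin K Λ i := fun Λ => Real.sInf_nonneg fun r hr => hr.1.le
  have h₁0 := hpos (idealLattice K (reps q) (reps q * c) γ)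
  have h₂0 := hpos (idealLattice K a (a * c) γ)
  generalize succMin K (idealLattice K (reps q) (reps q * c) γ) i = l₁ at *
  generalize succMin K (idealLattice K a (a * c) γ) i = l₂ at *
  clear_value n ρ M
  constructor
  · calc (R * M)⁻¹ * (n * ρ) * l₁ ≤ (R * M)⁻¹ * (n * ρ) * (R * n⁻¹ * l₂) :=
          mul_le_mul_of_nonneg_left hle₂ (by positivity)
      _ = ρ / M * l₂ := by field_simp
      _ ≤ 1 * l₂ := mul_le_mul_of_nonneg_right ((div_le_one hM0).mpr hrM) h₂0
      _ = l₂ := one_mul _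
  · refine hle₁.trans (mul_le_mul_of_nonneg_right ?_ h₁0)
    exact mul_le_mul_of_nonneg_left (le_mul_of_one_le_right hn0.le hr1') hR.le
end

section
/- Let 𝔞, 𝔡 be nonzero integral ideals of O_K, γ ∈ O_K and 1 ≤ i ≤ 2m. For any nonzero integral ideal 𝔟 of O_K one has λ^{(i)}(𝔞,𝔡,γ) ≪ λ^{(i)}(𝔞,𝔟𝔡,γ) ≪ 𝔑(𝔟)^{1/m}·λ^{(i)}(𝔞,𝔡,γ), with implicit constants depending only on K. -/
/-!
The two lattices are compared by moving linearly independent families from one to the other.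

Since `𝔟𝔡 ⊆ 𝔡`, the lattice `Λ(𝔞,𝔟𝔡,γ)` is contained in `Λ(𝔞,𝔡,γ)`, which gives the lower bound
with constant `1`. Conversely, multiplication by any `β ∈ 𝔟` sends `Λ(𝔞,𝔡,γ)` into
`Λ(𝔞,𝔟𝔡,γ)`; for `β ≠ 0` it is injective on `K_∞²`, so it preserves linear independence, and it
increases norms by a factor at most `‖β‖`. Minkowski's convex body theorem
(`exists_mem_ideal_norm_le`) provides a nonzero `β ∈ 𝔟` with `‖β‖ ≪ 𝔑(𝔟)^{1/m}`, and this gives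
the upper bound.

As the infimum of an empty set of reals is `0`, both comparisons need families of `i ≤ 2m`
linearly independent lattice vectors to exist. They come from multiplying a basis of `O_K²` by a
nonzero element of `𝔞𝔟𝔡` (`succMin_set_nonempty`).
-/

open NumberField Classical

lemma isUnit_iota (K : Type*) [Field K] [NumberField K] {x : 𝓞 K} (hx : x ≠ 0) :
    IsUnit (iota K x) := by
  have h : IsUnit (algebraMap (𝓞 K) K x) := by
    simpa [isUnit_iff_ne_zero] using hx
  exact h.map (mixedEmbedding K)

lemma linearIndependent_iota_mul (K : Type*) [Field K] [NumberField K] {x : 𝓞 K} (hx : x ≠ 0)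
    {ι : Type*} {v : ι → KInfty K × KInfty K} (hv : LinearIndependent ℝ v) :
    LinearIndependent ℝ (fun j => ((iota K x, iota K x) : KInfty K × KInfty K) * v j) := by
  have hu : IsUnit ((iota K x, iota K x) : KInfty K × KInfty K) :=
    Prod.isUnit_iff.2 ⟨isUnit_iota K hx, isUnit_iota K hx⟩
  exact hv.map' (LinearMap.mulLeft ℝ ((iota K x, iota K x) : KInfty K × KInfty K))
    (LinearMap.ker_eq_bot.2 hu.mul_right_injective)

lemma mul_ne_bot (K : Type*) [Field K] [NumberField K] {a b : Ideal (𝓞 K)}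
    (ha : a ≠ ⊥) (hb : b ≠ ⊥) : a * b ≠ ⊥ := by
  simp [ha, hb]

lemma iota_mul (K : Type*) [Field K] [NumberField K] (x y : 𝓞 K) :
    iota K (x * y) = iota K x * iota K y := by
  simp [iota]

lemma iota_mul_mem (K : Type*) [Field K] [NumberField K] {a d b : Ideal (𝓞 K)} {γ β : 𝓞 K}
    (hβ : β ∈ b) {v : KInfty K × KInfty K} (hv : v ∈ idealLattice K a d γ) :
    ((iota K β, iota K β) : KInfty K × KInfty K) * v ∈ idealLattice K a (b * d) γ := by
  obtain ⟨s, t, hs, ht, hst, rfl⟩ := hv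
  refine ⟨β * s, β * t, a.mul_mem_left _ hs, a.mul_mem_left _ ht, ?_, ?_⟩
  · have := Ideal.mul_mem_mul hβ hst
    convert this using 1
    ring
  · simp [iota_mul]

lemma norm_iota_mul_le (K : Type*) [Field K] [NumberField K] (β : 𝓞 K)
    (v : KInfty K × KInfty K) :
    ‖((iota K β, iota K β) : KInfty K × KInfty K) * v‖ ≤ ‖iota K β‖ * ‖v‖ := by
  refine max_le ?_ ?_
  · exact (norm_mul_le (iota K β) v.1).trans
      (mul_le_mul_of_nonneg_left (norm_fst_le v) (norm_nonneg _))
  · exact (norm_mul_le (iota K β) v.2).trans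
      (mul_le_mul_of_nonneg_left (norm_snd_le v) (norm_nonneg _))

/-- Multiplication by a nonzero `x ∈ O_K` turns a family of linearly independent vectors of norm
at most `r` into one of vectors of norm at most `D * r`, as soon as `‖x‖ ≤ D`. -/
lemma mul_mem_succMin_set (K : Type*) [Field K] [NumberField K] {x : 𝓞 K} (hx : x ≠ 0) {i : ℕ}
    {v : Fin i → KInfty K × KInfty K} {Λ : Set (KInfty K × KInfty K)}
    (hv : LinearIndependent ℝ v) {D r : ℝ} (hr : 0 < r) (hn : ∀ j, ‖v j‖ ≤ r) (hD : 0 < D)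
    (hxD : ‖iota K x‖ ≤ D)
    (hmem : ∀ j, ((iota K x, iota K x) : KInfty K × KInfty K) * v j ∈ Λ) :
    D * r ∈ {r : ℝ | 0 < r ∧ ∃ v : Fin i → KInfty K × KInfty K,
      (∀ j, v j ∈ Λ) ∧ LinearIndependent ℝ v ∧ ∀ j, ‖v j‖ ≤ r} := by
  have hli := linearIndependent_iota_mul K hx hv
  have hle : ∀ j, ‖((iota K x, iota K x) : KInfty K × KInfty K) * v j‖ ≤ D * r := fun j =>
    (norm_iota_mul_le K x (v j)).trans (mul_le_mul hxD (hn j) (norm_nonneg _) hD.le)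
  exact ⟨mul_pos hD hr, _, hmem, hli, hle⟩

/-- `Λ(O_K, O_K, 0)` is the full image of `O_K²`, which contains `i` linearly independent vectors
for every `i ≤ 2m`. -/
lemma exists_linearIndependent_top (K : Type*) [Field K] [NumberField K] {i : ℕ}
    (hi : i ≤ 2 * Module.finrank ℚ K) :
    ∃ v : Fin i → KInfty K × KInfty K, (∀ j, v j ∈ idealLattice K ⊤ ⊤ 0) ∧
      LinearIndependent ℝ v := by
  let B := (mixedEmbedding.latticeBasis K).prod (mixedEmbedding.latticeBasis K)
  have hcard : Fintype.card (Fin i) ≤ Fintype.card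
      (Module.Free.ChooseBasisIndex ℤ (𝓞 K) ⊕ Module.Free.ChooseBasisIndex ℤ (𝓞 K)) := by
    rw [Fintype.card_sum, ← Module.finrank_eq_card_chooseBasisIndex, RingOfIntegers.rank,
      Fintype.card_fin]
    omega
  obtain ⟨e⟩ := Function.Embedding.nonempty_of_card_le hcard
  refine ⟨fun j => B (e j), fun j => ?_, B.linearIndependent.comp e e.injective⟩
  rcases h : e j with k | k
  · exact ⟨RingOfIntegers.basis K k, 0, by simp, by simp, by simp,
      by simp [B, h, iota, mixedEmbedding.latticeBasis_apply, integralBasis_apply]⟩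
  · exact ⟨0, RingOfIntegers.basis K k, by simp, by simp, by simp,
      by simp [B, h, iota, mixedEmbedding.latticeBasis_apply, integralBasis_apply]⟩

/-- The set of radii whose infimum is `succMin` is nonempty, so that this infimum carries no
junk value. -/
lemma succMin_set_nonempty (K : Type*) [Field K] [NumberField K] {a d : Ideal (𝓞 K)}
    (ha : a ≠ ⊥) (hd : d ≠ ⊥) (γ : 𝓞 K) {i : ℕ} (hi : i ≤ 2 * Module.finrank ℚ K) :
    {r : ℝ | 0 < r ∧ ∃ v : Fin i → KInfty K × KInfty K,
      (∀ j, v j ∈ idealLattice K a d γ) ∧ LinearIndependent ℝ v ∧ ∀ j, ‖v j‖ ≤ r}.Nonempty := by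
  obtain ⟨v, hv, hli⟩ := exists_linearIndependent_top K hi
  obtain ⟨x, hx, hx0⟩ := Submodule.exists_mem_ne_zero_of_ne_bot (mul_ne_bot K ha hd)
  have hxa : x ∈ a := (Ideal.mul_le_left : a * d ≤ a) hx
  have hxd : x ∈ d := (Ideal.mul_le_right : a * d ≤ d) hx
  have hmem : ∀ j, ((iota K x, iota K x) : KInfty K × KInfty K) * v j ∈ idealLattice K a d γ := by
    intro j
    obtain ⟨s, t, -, -, -, h⟩ := hv j
    refine ⟨x * s, x * t, a.mul_mem_right _ hxa, a.mul_mem_right _ hxa, ?_, ?_⟩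
    · exact d.sub_mem (d.mul_mem_right _ hxd) (d.mul_mem_left _ (d.mul_mem_right _ hxd))
    · rw [h, iota_mul, iota_mul, Prod.mk_mul_mk]
  obtain ⟨M, hM⟩ := (Set.finite_range fun j => ‖v j‖).bddAbove
  have hM' : ∀ j, ‖v j‖ ≤ max M 1 := fun j => (hM (Set.mem_range_self j)).trans (le_max_left _ _)
  have hpos : 0 < ‖iota K x‖ := norm_pos_iff.2 (isUnit_iota K hx0).ne_zero
  exact ⟨_, mul_mem_succMin_set K hx0 hli (lt_max_of_lt_right one_pos) hM' hpos le_rfl hmem⟩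

lemma succMin_set_bddBelow (K : Type*) [Field K] [NumberField K]
    (Λ : Set (KInfty K × KInfty K)) (i : ℕ) :
    BddBelow {r : ℝ | 0 < r ∧ ∃ v : Fin i → KInfty K × KInfty K,
      (∀ j, v j ∈ Λ) ∧ LinearIndependent ℝ v ∧ ∀ j, ‖v j‖ ≤ r} :=
  ⟨0, fun _ hr => hr.1.le⟩

lemma minkowskiBound_eq_absNorm_mul (K : Type*) [Field K] [NumberField K]
    (I : (FractionalIdeal (nonZeroDivisors (𝓞 K)) K)ˣ) :
    mixedEmbedding.minkowskiBound K I =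
      ENNReal.ofReal (FractionalIdeal.absNorm I.1) * mixedEmbedding.minkowskiBound K 1 := by
  simp only [mixedEmbedding.minkowskiBound,
    mixedEmbedding.volume_fundamentalDomain_fractionalIdealLatticeBasis]
  simp [mul_assoc]

/-- Minkowski's theorem applied to a cube: every nonzero ideal contains a nonzero element all of
whose archimedean absolute values are `≪ 𝔑(𝔟)^{1/m}`. -/
lemma exists_mem_ideal_norm_le (K : Type*) [Field K] [NumberField K] :
    ∃ C : ℝ, 0 < C ∧ ∀ b : Ideal (𝓞 K), b ≠ ⊥ → ∃ β ∈ b, β ≠ 0 ∧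
      ‖iota K β‖ ≤ C * (Ideal.absNorm b : ℝ) ^ ((1 : ℝ) / (Module.finrank ℚ K)) := by
  obtain ⟨B, hB⟩ : ∃ B : ℕ, mixedEmbedding.minkowskiBound K 1 <
      (mixedEmbedding.convexBodyLTFactor K) * B := by
    conv => congr; ext; rw [mul_comm]
    exact ENNReal.exists_nat_mul_gt
      (ENNReal.coe_ne_zero.mpr (mixedEmbedding.convexBodyLTFactor_ne_zero K))
      (ne_of_lt (mixedEmbedding.minkowskiBound_lt_top K 1))
  have hB0 : B ≠ 0 := by
    rintro rfl
    simp at hB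
  have hm : Module.finrank ℚ K ≠ 0 := Module.finrank_pos.ne'
  refine ⟨B, by positivity, fun b hb => ?_⟩
  have hN0 : Ideal.absNorm b ≠ 0 := Ideal.absNorm_eq_zero_iff.not.2 hb
  let I : (FractionalIdeal (nonZeroDivisors (𝓞 K)) K)ˣ :=
    Units.mk0 (b : FractionalIdeal (nonZeroDivisors (𝓞 K)) K)
      (FractionalIdeal.coeIdeal_ne_zero.2 hb)
  -- The cube of half-side `f` has volume proportional to `f ^ m = B ^ m * 𝔑(𝔟)`, and `B ≤ B ^ m`.
  let f : NNReal := B * (Ideal.absNorm b : NNReal) ^ ((1 : ℝ) / (Module.finrank ℚ K))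
  have hf : f ^ Module.finrank ℚ K = B ^ Module.finrank ℚ K * (Ideal.absNorm b : NNReal) := by
    rw [mul_pow, one_div, NNReal.rpow_inv_natCast_pow _ hm]
  have hlt : mixedEmbedding.minkowskiBound K I <
      MeasureTheory.volume (mixedEmbedding.convexBodyLT K (fun _ => f)) := by
    have hprod : (∏ w : InfinitePlace K, (f : ENNReal) ^ w.mult) =
        ((B ^ Module.finrank ℚ K * (Ideal.absNorm b : NNReal) : NNReal) : ENNReal) := by
      rw [Finset.prod_pow_eq_pow_sum, InfinitePlace.sum_mult_eq, ← hf, ENNReal.coe_pow]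
    rw [minkowskiBound_eq_absNorm_mul, mixedEmbedding.convexBodyLT_volume]
    simp only [ENNReal.ofNNReal_finsetProd, ENNReal.coe_pow]
    rw [hprod]
    have hN : ENNReal.ofReal (FractionalIdeal.absNorm I.1) = (Ideal.absNorm b : ENNReal) := by
      simp [I, FractionalIdeal.coeIdeal_absNorm]
    rw [hN]
    calc (Ideal.absNorm b : ENNReal) * mixedEmbedding.minkowskiBound K 1
        < (Ideal.absNorm b : ENNReal) * ((mixedEmbedding.convexBodyLTFactor K) * B) :=
          ENNReal.mul_lt_mul_right (by exact_mod_cast hN0) (ENNReal.natCast_ne_top _) hB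
      _ ≤ (Ideal.absNorm b : ENNReal) *
            ((mixedEmbedding.convexBodyLTFactor K) * (B : ENNReal) ^ Module.finrank ℚ K) := by
          gcongr
          exact_mod_cast Nat.le_self_pow hm B
      _ = _ := by
          push_cast
          ring
  obtain ⟨x, hx, hx0, hxw⟩ := mixedEmbedding.exists_ne_zero_mem_ideal_lt K I hlt
  obtain ⟨β, hβ, rfl⟩ := (FractionalIdeal.mem_coeIdeal _).1 hx
  refine ⟨β, hβ, by rintro rfl; simp at hx0, ?_⟩
  rw [iota, mixedEmbedding.norm_eq_sup'_normAtPlace]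
  refine Finset.sup'_le _ _ fun w _ => ?_
  rw [mixedEmbedding.normAtPlace_apply]
  refine (hxw w).le.trans (le_of_eq ?_)
  simp [f]

/-- **Lemma 2.1(2).** For all nonzero ideals `𝔞, 𝔡, 𝔟`, all `γ ∈ O_K` and all
`1 ≤ i ≤ 2m`, one has
`λ^{(i)}(𝔞,𝔡,γ) ≪ λ^{(i)}(𝔞,𝔟𝔡,γ) ≪ 𝔑(𝔟)^{1/m} λ^{(i)}(𝔞,𝔡,γ)`,
with implicit constants depending only on `K`. -/
theorem successive_minima_modulus_scaling
    (K : Type*) [Field K] [NumberField K] :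
    ∃ C₁ C₂ : ℝ, 0 < C₁ ∧ 0 < C₂ ∧
      ∀ (a d b : Ideal (𝓞 K)), a ≠ ⊥ → d ≠ ⊥ → b ≠ ⊥ → ∀ γ : 𝓞 K,
        ∀ i : ℕ, 1 ≤ i → i ≤ 2 * Module.finrank ℚ K →
          succMin K (idealLattice K a d γ) i
              ≤ C₁ * succMin K (idealLattice K a (b * d) γ) i ∧
          succMin K (idealLattice K a (b * d) γ) i ≤
              C₂ * (Ideal.absNorm b : ℝ) ^ ((1 : ℝ) / (Module.finrank ℚ K)) *
                succMin K (idealLattice K a d γ) i := by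
  obtain ⟨C, hC, hmink⟩ := exists_mem_ideal_norm_le K
  refine ⟨1, C, one_pos, hC, fun a d b ha hd hb γ i _ hi => ⟨?_, ?_⟩⟩
  · rw [one_mul]
    refine csInf_le_csInf (succMin_set_bddBelow K _ i)
      (succMin_set_nonempty K ha (mul_ne_bot K hb hd) γ hi) ?_
    rintro r ⟨hr, v, hv, hli, hn⟩
    refine ⟨hr, v, fun j => ?_, hli, hn⟩
    obtain ⟨s, t, hs, ht, hst, h⟩ := hv j
    exact ⟨s, t, hs, ht, (Ideal.mul_le_right : b * d ≤ d) hst, h⟩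
  · obtain ⟨β, hβ, hβ0, hβn⟩ := hmink b hb
    have hN : 0 < (Ideal.absNorm b : ℝ) := by
      exact_mod_cast Nat.pos_of_ne_zero (Ideal.absNorm_eq_zero_iff.not.2 hb)
    set D : ℝ := C * (Ideal.absNorm b : ℝ) ^ ((1 : ℝ) / (Module.finrank ℚ K)) with hD
    have hDpos : 0 < D := by positivity
    rw [← div_le_iff₀' hDpos]
    refine le_csInf (succMin_set_nonempty K ha hd γ hi) ?_
    rintro r ⟨hr, v, hv, hli, hn⟩
    rw [div_le_iff₀' hDpos]
    exact csInf_le (succMin_set_bddBelow K _ i)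
      (mul_mem_succMin_set K hβ0 hli hr hn hDpos hβn fun j => iota_mul_mem K hβ (hv j))
end

section
/- Let 𝔞, 𝔡 be nonzero integral ideals of O_K, γ ∈ O_K and 1 ≤ i ≤ 2m. Then λ^{(i)}(𝔞,𝔡,γ) ≪ 𝔑(𝔞²𝔡(𝔞+𝔡)^{−1})^{1/(2m−i+1)}, with an implicit constant depending only on K. -/
/-!
Suppose `Λ = Λ(𝔞,𝔡,γ)` has fewer than `i` linearly independent vectors of norm at most `L ≥ 1`, and
let `V` be the span of those vectors, so `k = dim V ≤ i - 1`. A body of size slightly below `1`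
along `V` and of size about `L` transversally contains no nonzero point of `Λ`: such a point would
have norm at most `L`, hence lie in `V`, hence have norm less than `1`, whereas every nonzero vector
of `Λ` has norm at least `1` because its coordinates are algebraic integers
(`one_le_norm_of_mem_idealLattice`). Minkowski's convex body theorem then bounds the volume of the
body, which is a constant times `L ^ (2m - k)`, by a constant times the covolume of `Λ`. Since
`L ^ (2m - k) ≥ L ^ (2m - i + 1)`, this bounds `L` as required.

The two ingredients are `exists_body`, which produces the body with a volume that does not depend
on the position of `V`, and `exists_mem_idealLattice`, which is Minkowski's theorem with the
covolume of `Λ` made explicit: `Λ` is the image of `(𝔞 ∩ 𝔡) × 𝔞` under the volume-preserving shear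
`(x, y) ↦ (x + γ y, y)`, and `(𝔞 ∩ 𝔡)𝔞 = 𝔞²𝔡(𝔞+𝔡)⁻¹`.
-/

open NumberField Classical

open MeasureTheory Module

/-! ### Convex bodies stretched transversally to a subspace -/

/-- The linear map that is the identity on `V` and multiplication by `s` on `Vᗮ`. -/
noncomputable def stretch {F : Type*} [NormedAddCommGroup F] [InnerProductSpace ℝ F]
    [FiniteDimensional ℝ F] (V : Submodule ℝ F) (s : ℝ) : F →ₗ[ℝ] F :=
  V.starProjection.toLinearMap + s • (LinearMap.id - V.starProjection.toLinearMap)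

section stretch

variable {F : Type*} [NormedAddCommGroup F] [InnerProductSpace ℝ F] [FiniteDimensional ℝ F]
  (V : Submodule ℝ F) (s : ℝ)

lemma stretch_apply (x : F) :
    stretch V s x = V.starProjection x + s • (x - V.starProjection x) := rfl

lemma stretch_of_mem {x : F} (hx : x ∈ V) : stretch V s x = x := by
  rw [stretch_apply, Submodule.starProjection_eq_self_iff.mpr hx, sub_self, smul_zero, add_zero]

lemma stretch_of_mem_orthogonal {x : F} (hx : x ∈ Vᗮ) : stretch V s x = s • x := by
  rw [stretch_apply, (Submodule.starProjection_apply_eq_zero_iff V).mpr hx, sub_zero, zero_add]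

lemma det_stretch : LinearMap.det (stretch V s) = s ^ (finrank ℝ F - finrank ℝ V) := by
  have hc : IsCompl V Vᗮ := Submodule.isCompl_orthogonal V
  have h : stretch V s = (Submodule.prodEquivOfIsCompl V Vᗮ hc : (V × Vᗮ) →ₗ[ℝ] F) ∘ₗ
      (LinearMap.prodMap LinearMap.id (s • LinearMap.id)) ∘ₗ
      ((Submodule.prodEquivOfIsCompl V Vᗮ hc).symm : F →ₗ[ℝ] (V × Vᗮ)) := by
    ext x
    obtain ⟨⟨v, w⟩, rfl⟩ := (Submodule.prodEquivOfIsCompl V Vᗮ hc).surjective x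
    simp [stretch_of_mem V s v.2, stretch_of_mem_orthogonal V s w.2]
  rw [h, LinearMap.det_conj, LinearMap.det_prodMap, LinearMap.det_id, one_mul, LinearMap.det_smul,
    LinearMap.det_id, mul_one]
  congr 1
  have := Submodule.finrank_add_finrank_orthogonal V
  omega

lemma norm_le_of_stretch {L : ℝ} (hL : 1 ≤ L) (x : F) : ‖x‖ ≤ 2 * L * ‖stretch V L⁻¹ x‖ := by
  have hL0 : L ≠ 0 := by positivity
  set y := stretch V L⁻¹ x with hy
  have hPP : V.starProjection (V.starProjection x) = V.starProjection x :=
    Submodule.starProjection_eq_self_iff.mpr (Submodule.starProjection_apply_mem V x)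
  have hPy : V.starProjection y = V.starProjection x := by
    rw [hy, stretch_apply, map_add, map_smul, map_sub, hPP, sub_self, smul_zero, add_zero]
  have hx : x = L • y - (L - 1) • V.starProjection y := by
    rw [hPy, hy, stretch_apply, smul_add, smul_smul, mul_inv_cancel₀ hL0]
    module
  have hP : ‖V.starProjection y‖ ≤ ‖y‖ := V.norm_starProjection_apply_le y
  calc ‖x‖ = ‖L • y - (L - 1) • V.starProjection y‖ := by rw [← hx]
    _ ≤ ‖L • y‖ + ‖(L - 1) • V.starProjection y‖ := norm_sub_le _ _
    _ = L * ‖y‖ + (L - 1) * ‖V.starProjection y‖ := by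
      rw [norm_smul, norm_smul, Real.norm_of_nonneg (by linarith), Real.norm_of_nonneg (by linarith)]
    _ ≤ L * ‖y‖ + (L - 1) * ‖y‖ := by
      have : 0 ≤ L - 1 := by linarith
      gcongr
    _ ≤ 2 * L * ‖y‖ := by nlinarith [norm_nonneg y]

end stretch

/-- A convex symmetric body of size at most `L` that meets `V` only in norm less than `1`, with
volume depending on `V` only through its dimension. It is the preimage of a fixed Euclidean ball
under the map shrinking the orthogonal complement of `V` by `L`. -/
lemma exists_body (E : Type*) [NormedAddCommGroup E] [NormedSpace ℝ E] [FiniteDimensional ℝ E]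
    [MeasurableSpace E] [BorelSpace E] (μ : Measure E) [μ.IsAddHaarMeasure] :
    ∃ c : ℝ, 0 < c ∧ ∀ L : ℝ, 1 ≤ L → ∀ V : Submodule ℝ E, ∃ B : Set E,
      (∀ x ∈ B, -x ∈ B) ∧ Convex ℝ B ∧
      μ B = ENNReal.ofReal (c * L ^ (finrank ℝ E - finrank ℝ V)) ∧
      (∀ x ∈ B, ‖x‖ ≤ L) ∧ ∀ x ∈ B, x ∈ V → ‖x‖ < 1 := by
  let e : E ≃L[ℝ] EuclideanSpace ℝ (Fin (finrank ℝ E)) :=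
    ContinuousLinearEquiv.ofFinrankEq (by simp)
  obtain ⟨M, hM, hMe⟩ : ∃ M : ℝ, 0 < M ∧ ∀ x : E, ‖x‖ ≤ M * ‖e x‖ := by
    refine ⟨‖(e.symm : EuclideanSpace ℝ (Fin (finrank ℝ E)) →L[ℝ] E)‖ + 1, by positivity, fun x ↦ ?_⟩
    have h := (e.symm : EuclideanSpace ℝ (Fin (finrank ℝ E)) →L[ℝ] E).le_opNorm (e x)
    simp only [ContinuousLinearEquiv.coe_coe, ContinuousLinearEquiv.symm_apply_apply] at h
    nlinarith [norm_nonneg (e x)]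
  set r : ℝ := (2 * M)⁻¹ with hr
  have hr0 : 0 < r := by positivity
  have hMr : M * r = 1 / 2 := by rw [hr]; field_simp
  set B₀ : Set E := e ⁻¹' Metric.ball 0 r with hB₀
  have hpos : 0 < μ B₀ :=
    (Metric.isOpen_ball.preimage e.continuous).measure_pos μ ⟨0, by simp [hr0]⟩
  have hfin : μ B₀ < ⊤ := by
    refine Bornology.IsBounded.measure_lt_top ?_
    refine Metric.isBounded_ball (x := (0 : E)) (r := 1) |>.subset fun x hx ↦ ?_
    have hx' : ‖e x‖ < r := by simpa [hB₀] using hx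
    have := hMe x
    rw [mem_ball_zero_iff]
    nlinarith
  refine ⟨(μ B₀).toReal, ENNReal.toReal_pos hpos.ne' hfin.ne, fun L hL V ↦ ?_⟩
  have hL0 : 0 < L := by linarith
  let V' := V.map (e.toLinearEquiv : E →ₗ[ℝ] EuclideanSpace ℝ (Fin (finrank ℝ E)))
  let T : E →ₗ[ℝ] E := (e.toLinearEquiv.symm : EuclideanSpace ℝ (Fin (finrank ℝ E)) →ₗ[ℝ] E) ∘ₗ
    stretch V' L⁻¹ ∘ₗ (e.toLinearEquiv : E →ₗ[ℝ] EuclideanSpace ℝ (Fin (finrank ℝ E)))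
  have hT : ∀ x, e (T x) = stretch V' L⁻¹ (e x) := fun x ↦ by simp [T]
  have hdet : LinearMap.det T = L⁻¹ ^ (finrank ℝ E - finrank ℝ V) := by
    have h := LinearMap.det_conj (stretch V' L⁻¹) e.toLinearEquiv.symm
    rw [LinearEquiv.symm_symm] at h
    rw [show LinearMap.det T = _ from h, det_stretch, LinearEquiv.finrank_map_eq,
      finrank_euclideanSpace_fin]
  have hmem : ∀ x, x ∈ T ⁻¹' B₀ ↔ ‖stretch V' L⁻¹ (e x)‖ < r := fun x ↦ by
    rw [Set.mem_preimage, hB₀, Set.mem_preimage, mem_ball_zero_iff, hT]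
  refine ⟨T ⁻¹' B₀, fun x hx ↦ ?_, ?_, ?_, fun x hx ↦ ?_, fun x hx hV ↦ ?_⟩
  · rw [hmem] at hx ⊢
    rwa [map_neg, map_neg, norm_neg]
  · exact ((convex_ball (0 : EuclideanSpace ℝ (Fin (finrank ℝ E))) r).linear_preimage
      e.toLinearEquiv.toLinearMap).linear_preimage T
  · rw [Measure.addHaar_preimage_linearMap μ (by rw [hdet]; positivity), hdet, ← inv_pow, inv_inv,
      abs_of_pos (by positivity), mul_comm, ENNReal.ofReal_mul ENNReal.toReal_nonneg,
      ENNReal.ofReal_toReal hfin.ne]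
  · rw [hmem] at hx
    have h1 := norm_le_of_stretch V' hL (e x)
    have h2 := hMe x
    calc ‖x‖ ≤ M * ‖e x‖ := h2
      _ ≤ M * (2 * L * r) := by gcongr; exact h1.trans (by gcongr)
      _ = L := by linear_combination 2 * L * hMr
  · rw [hmem, stretch_of_mem V' _ (show e x ∈ V' from Submodule.mem_map_of_mem hV)] at hx
    have h2 := hMe x
    nlinarith

/-! ### The lattice `Λ(𝔞,𝔡,γ)` in `K_∞²` -/

instance borelSpace_KInfty_prod (K : Type*) [Field K] [NumberField K] :
    BorelSpace (KInfty K × KInfty K) := Prod.borelSpace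

/-- Lebesgue measure on `K_∞²`. -/
noncomputable abbrev volume₂ (K : Type*) [Field K] [NumberField K] :
    Measure (KInfty K × KInfty K) :=
  (volume : Measure (KInfty K)).prod (volume : Measure (KInfty K))

instance isAddHaarMeasure_KInfty_prod (K : Type*) [Field K] [NumberField K] :
    (volume₂ K).IsAddHaarMeasure :=
  Measure.prod.instIsAddHaarMeasure (volume : Measure (KInfty K)) (volume : Measure (KInfty K))

/-- A nonzero algebraic integer has norm at least `1` in `K_∞`, by the product formula. -/
lemma one_le_norm_iota (K : Type*) [Field K] [NumberField K] {s : 𝓞 K} (hs : s ≠ 0) :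
    1 ≤ ‖iota K s‖ := by
  obtain ⟨w, hw⟩ : ∃ w : InfinitePlace K, 1 ≤ w s := by
    by_contra! h
    obtain ⟨w₀⟩ := (inferInstance : Nonempty (InfinitePlace K))
    exact (h w₀).not_ge (InfinitePlace.one_le_of_lt_one hs fun z _ ↦ h z)
  rw [iota, mixedEmbedding.norm_eq_sup'_normAtPlace]
  refine hw.trans ?_
  rw [← mixedEmbedding.normAtPlace_apply]
  exact Finset.le_sup' (fun w ↦ mixedEmbedding.normAtPlace w (mixedEmbedding K (s : K)))
    (Finset.mem_univ w)

lemma one_le_norm_of_mem_idealLattice (K : Type*) [Field K] [NumberField K]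
    {a d : Ideal (𝓞 K)} {γ : 𝓞 K} {v : KInfty K × KInfty K} (hv : v ∈ idealLattice K a d γ)
    (h0 : v ≠ 0) : 1 ≤ ‖v‖ := by
  obtain ⟨s, t, -, -, -, rfl⟩ := hv
  by_cases hs : s = 0
  · have ht : t ≠ 0 := by
      rintro rfl
      exact h0 (by simp [hs, iota])
    exact (one_le_norm_iota K ht).trans (norm_snd_le (iota K s, iota K t))
  · exact (one_le_norm_iota K hs).trans (norm_fst_le (iota K s, iota K t))

lemma isUnit_coeIdeal (K : Type*) [Field K] [NumberField K] {I : Ideal (𝓞 K)} (hI : I ≠ ⊥) :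
    IsUnit (I : FractionalIdeal (nonZeroDivisors (𝓞 K)) K) :=
  IsUnit.mk0 _ (FractionalIdeal.coeIdeal_ne_zero.mpr hI)

/-- The identity `(𝔞 ∩ 𝔡)𝔞 = 𝔞²𝔡(𝔞+𝔡)⁻¹`. -/
lemma inf_mul_eq {R : Type*} [CommRing R] [IsDedekindDomain R] {a d c : Ideal R}
    (ha : a ≠ ⊥) (hc : (a ⊔ d) * c = d) : (a ⊓ d) * a = a ^ 2 * c := by
  have h : (a ⊔ d) * (a ⊓ d) = (a ⊔ d) * (a * c) := by
    rw [Ideal.sup_mul_inf]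
    nth_rewrite 1 [← hc]
    ring
  have h0 : a ⊔ d ≠ 0 := fun h0 ↦ ha (eq_bot_iff.mpr (le_sup_left.trans h0.le))
  rw [mul_left_cancel₀ h0 h]
  ring

/-- The shear `(x, y) ↦ (x + γ y, y)` of `K_∞²`. -/
noncomputable def shear (K : Type*) [Field K] [NumberField K] (γ : 𝓞 K) :
    KInfty K × KInfty K →ₗ[ℝ] KInfty K × KInfty K :=
  (LinearMap.fst ℝ _ _ + LinearMap.mulLeft ℝ (iota K γ) ∘ₗ LinearMap.snd ℝ _ _).prod
    (LinearMap.snd ℝ _ _)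

lemma shear_apply (K : Type*) [Field K] [NumberField K] (γ : 𝓞 K) (x : KInfty K × KInfty K) :
    shear K γ x = (x.1 + iota K γ * x.2, x.2) := rfl

/-- `shear K (-γ)` is the inverse of `shear K γ`. -/
lemma shear_neg_shear (K : Type*) [Field K] [NumberField K] (γ : 𝓞 K)
    (x : KInfty K × KInfty K) : shear K (-γ) (shear K γ x) = x := by
  simp [shear_apply, iota]

/-- A shear maps each line `K_∞ × {y}` to itself by a translation, so it preserves volume. -/
lemma measurePreserving_shear (K : Type*) [Field K] [NumberField K] (γ : 𝓞 K) :
    MeasurePreserving (shear K γ) (volume₂ K)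
      (volume₂ K) := by
  have h := MeasurePreserving.skew_product (μa := (volume : Measure (KInfty K)))
    (μc := (volume : Measure (KInfty K))) (μd := (volume : Measure (KInfty K)))
    (MeasurePreserving.id _) (g := fun y x ↦ x + iota K γ * y)
    (by
      apply Continuous.measurable
      unfold Function.uncurry
      fun_prop)
    (Filter.Eventually.of_forall fun y ↦ map_add_right_eq_self _ _)
  exact (Measure.measurePreserving_swap.comp h).comp Measure.measurePreserving_swap

/-- Minkowski's convex body theorem for `Λ(𝔞,𝔡,γ)`. The shear by `γ` carries `(𝔞 ∩ 𝔡) × 𝔞` onto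
`Λ(𝔞,𝔡,γ)`, so the covolume is that of a product of two ideals. -/
lemma exists_mem_idealLattice (K : Type*) [Field K] [NumberField K] :
    ∃ C₁ : ℝ, 0 < C₁ ∧ ∀ a d : Ideal (𝓞 K), a ≠ ⊥ → d ≠ ⊥ → ∀ γ : 𝓞 K,
      ∀ c : Ideal (𝓞 K), (a ⊔ d) * c = d → ∀ B : Set (KInfty K × KInfty K),
        (∀ x ∈ B, -x ∈ B) → Convex ℝ B →
        ENNReal.ofReal (C₁ * (Ideal.absNorm (a ^ 2 * c) : ℝ)) <
          (volume₂ K) B →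
        ∃ v ∈ idealLattice K a d γ, v ≠ 0 ∧ v ∈ B := by
  set v₀ : ENNReal := volume (ZSpan.fundamentalDomain (mixedEmbedding.latticeBasis K)) with hv₀
  have hv₀fin : v₀ < ⊤ := (ZSpan.fundamentalDomain_isBounded _).measure_lt_top
  refine ⟨v₀.toReal ^ 2 * 2 ^ finrank ℝ (KInfty K × KInfty K) + 1, by positivity,
    fun a d ha hd γ c hc B hsymm hconv hvol ↦ ?_⟩
  have had : a ⊓ d ≠ ⊥ := fun h ↦ by
    have h1 := Ideal.sup_mul_inf a d
    rw [h, Ideal.mul_bot] at h1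
    exact mul_ne_zero ha hd h1.symm
  set I₁ := (isUnit_coeIdeal K had).unit with hI₁
  set I₂ := (isUnit_coeIdeal K ha).unit with hI₂
  set b₁ := mixedEmbedding.fractionalIdealLatticeBasis K I₁ with hb₁
  set b₂ := mixedEmbedding.fractionalIdealLatticeBasis K I₂ with hb₂
  set b := b₁.prod b₂ with hb
  have hbdom : ZSpan.fundamentalDomain b =
      ZSpan.fundamentalDomain b₁ ×ˢ ZSpan.fundamentalDomain b₂ := by
    ext x
    simp [ZSpan.mem_fundamentalDomain, hb]
  have hmeas : (volume₂ K) (ZSpan.fundamentalDomain b) =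
      ENNReal.ofReal (v₀.toReal ^ 2 * (Ideal.absNorm (a ^ 2 * c) : ℝ)) := by
    rw [hbdom, Measure.prod_prod, hb₁, hb₂,
      mixedEmbedding.volume_fundamentalDomain_fractionalIdealLatticeBasis,
      mixedEmbedding.volume_fundamentalDomain_fractionalIdealLatticeBasis, hI₁, hI₂,
      IsUnit.unit_spec, IsUnit.unit_spec, FractionalIdeal.coeIdeal_absNorm,
      FractionalIdeal.coeIdeal_absNorm, ← hv₀, ← inf_mul_eq ha hc, map_mul,
      ← ENNReal.ofReal_toReal hv₀fin.ne, ENNReal.toReal_ofReal ENNReal.toReal_nonneg,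
      ← ENNReal.ofReal_mul (by positivity), ← ENNReal.ofReal_mul (by positivity),
      ← ENNReal.ofReal_mul (by positivity)]
    congr 1
    push_cast
    ring
  have hcount : Countable (Submodule.span ℤ (Set.range b)).toAddSubgroup := by
    change Countable (Submodule.span ℤ (Set.range b))
    infer_instance
  have hlt : (volume₂ K) (ZSpan.fundamentalDomain b) *
      2 ^ finrank ℝ (KInfty K × KInfty K) <
      (volume₂ K) (shear K γ ⁻¹' B) := by
    have hB : NullMeasurableSet B (volume₂ K) :=
      hconv.nullMeasurableSet _
    rw [(measurePreserving_shear K γ).measure_preimage hB, hmeas]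
    refine lt_of_le_of_lt ?_ hvol
    rw [show (2 : ENNReal) = ENNReal.ofReal 2 by simp, ← ENNReal.ofReal_pow (by norm_num),
      ← ENNReal.ofReal_mul (by positivity)]
    apply ENNReal.ofReal_le_ofReal
    have : (0 : ℝ) ≤ (Ideal.absNorm (a ^ 2 * c) : ℝ) := by positivity
    linarith
  obtain ⟨⟨x, hx⟩, hx0, hxB⟩ := exists_ne_zero_mem_lattice_of_measure_mul_two_pow_lt_measure
    (ZSpan.isAddFundamentalDomain' b (volume₂ K))
    (s := shear K γ ⁻¹' B)
    (fun x hx ↦ by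
      rw [Set.mem_preimage, map_neg]
      exact hsymm _ hx)
    (hconv.linear_preimage _) hlt
  have hx0' : x ≠ 0 := fun h ↦ hx0 (Subtype.ext h)
  rw [Submodule.mem_toAddSubgroup, b.mem_span_iff_repr_mem ℤ] at hx
  have h₁ : x.1 ∈ Submodule.span ℤ (Set.range b₁) := by
    rw [b₁.mem_span_iff_repr_mem ℤ]
    intro i
    simpa [hb] using hx (Sum.inl i)
  have h₂ : x.2 ∈ Submodule.span ℤ (Set.range b₂) := by
    rw [b₂.mem_span_iff_repr_mem ℤ]
    intro i
    simpa [hb] using hx (Sum.inr i)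
  rw [hb₁, mixedEmbedding.mem_span_fractionalIdealLatticeBasis, hI₁, IsUnit.unit_spec] at h₁
  rw [hb₂, mixedEmbedding.mem_span_fractionalIdealLatticeBasis, hI₂, IsUnit.unit_spec] at h₂
  obtain ⟨_, hs', hs⟩ := h₁
  obtain ⟨_, ht', ht⟩ := h₂
  obtain ⟨s, hsI, rfl⟩ := (FractionalIdeal.mem_coeIdeal _).mp hs'
  obtain ⟨t, htI, rfl⟩ := (FractionalIdeal.mem_coeIdeal _).mp ht'
  refine ⟨shear K γ x, ⟨s + γ * t, t, a.add_mem hsI.1 (a.mul_mem_left _ htI), htI, ?_, ?_⟩, ?_, hxB⟩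
  · simpa using hsI.2
  · rw [shear_apply, ← hs, ← ht]
    simp [iota]
  · intro h
    apply hx0'
    rw [← shear_neg_shear K γ x, h, map_zero]

/-! ### The bound for the successive minima -/

/-- **Lemma 2.1(3).** For all nonzero ideals `𝔞, 𝔡`, all `γ ∈ O_K` and all
`1 ≤ i ≤ 2m`, one has `λ^{(i)}(𝔞,𝔡,γ) ≪ 𝔑(𝔞²𝔡(𝔞+𝔡)^{−1})^{1/(2m−i+1)}`, with an
implicit constant depending only on `K`. Here `𝔡(𝔞+𝔡)^{−1}` is the ideal `𝔠` with
`(𝔞 ⊔ 𝔡)𝔠 = 𝔡`, so that `𝔞²𝔡(𝔞+𝔡)^{−1} = 𝔞²𝔠`. -/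
theorem successive_minima_upper_bound
    (K : Type*) [Field K] [NumberField K] :
    ∃ C : ℝ, 0 < C ∧
      ∀ (a d : Ideal (𝓞 K)), a ≠ ⊥ → d ≠ ⊥ → ∀ γ : 𝓞 K,
        ∀ c : Ideal (𝓞 K), (a ⊔ d) * c = d →
          ∀ i : ℕ, 1 ≤ i → i ≤ 2 * Module.finrank ℚ K →
            succMin K (idealLattice K a d γ) i ≤
              C * (Ideal.absNorm (a ^ 2 * c) : ℝ) ^
                ((1 : ℝ) / (2 * Module.finrank ℚ K - i + 1)) := by
  obtain ⟨C₁, hC₁, hmink⟩ := exists_mem_idealLattice K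
  obtain ⟨c₀, hc₀, hbody⟩ := exists_body (KInfty K × KInfty K)
    (volume₂ K)
  -- With this constant, `c₀ * C > C₁`, so the body at scale `L = C * D ^ (1 / p)` is too large.
  set C : ℝ := C₁ / c₀ + 1 with hC
  have hC1 : 1 ≤ C := by
    have : 0 < C₁ / c₀ := by positivity
    linarith
  refine ⟨C, by linarith, fun a d ha hd γ c hc i hi1 hi ↦ ?_⟩
  set D : ℝ := (Ideal.absNorm (a ^ 2 * c) : ℝ) with hD
  have hD1 : 1 ≤ D := by
    have hc0 : c ≠ 0 := by
      rintro rfl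
      exact hd (by rw [← hc, mul_zero]; rfl)
    have : Ideal.absNorm (a ^ 2 * c) ≠ 0 :=
      Ideal.absNorm_eq_zero_iff.not.mpr (mul_ne_zero (pow_ne_zero 2 ha) hc0)
    rw [hD]
    exact_mod_cast Nat.one_le_iff_ne_zero.mpr this
  set m := finrank ℚ K with hm
  have hexp : (2 * (m : ℝ) - i + 1) = ((2 * m - i + 1 : ℕ) : ℝ) := by
    push_cast [Nat.cast_sub hi]
    ring
  rw [hexp]
  set p := 2 * m - i + 1 with hp
  set L : ℝ := C * D ^ ((1 : ℝ) / (p : ℝ)) with hLdef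
  have hDp : 1 ≤ D ^ ((1 : ℝ) / (p : ℝ)) := Real.one_le_rpow hD1 (by positivity)
  have hL1 : 1 ≤ L := one_le_mul_of_one_le_of_one_le hC1 hDp
  have hLp : C * D ≤ L ^ p := by
    rw [hLdef, mul_pow, one_div, Real.rpow_inv_natCast_pow (by linarith) (by omega)]
    gcongr
    exact le_self_pow₀ hC1 (by omega)
  -- `V` is the span of the lattice vectors of norm at most `L`.
  set S : Set (KInfty K × KInfty K) := {v | v ∈ idealLattice K a d γ ∧ ‖v‖ ≤ L} with hS
  set V := Submodule.span ℝ S with hV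
  obtain ⟨f, hfS, hfli⟩ : ∃ f : Fin (finrank ℝ V) → KInfty K × KInfty K,
      (∀ j, f j ∈ S) ∧ LinearIndependent ℝ f := by
    obtain ⟨f, hfS, -, hfli⟩ := Submodule.exists_fun_fin_finrank_span_eq ℝ S
    exact ⟨f, hfS, hfli⟩
  by_cases hk : i ≤ finrank ℝ V
  · refine csInf_le ⟨0, fun r hr ↦ hr.1.le⟩ ⟨by linarith, f ∘ Fin.castLE hk,
      fun j ↦ (hfS (Fin.castLE hk j)).1, hfli.comp _ (Fin.castLE_injective hk),
      fun j ↦ (hfS (Fin.castLE hk j)).2⟩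
  · exfalso
    push Not at hk
    obtain ⟨B, hsymm, hconv, hvol, hBL, hBV⟩ := hbody L hL1 V
    have hn : finrank ℝ (KInfty K × KInfty K) = 2 * m := by
      rw [finrank_prod, mixedEmbedding.finrank, two_mul]
    obtain ⟨v, hvΛ, hv0, hvB⟩ := hmink a d ha hd γ c hc B hsymm hconv (by
      rw [hvol, hn, ENNReal.ofReal_lt_ofReal_iff (by positivity)]
      calc C₁ * D < c₀ * (C * D) := by
            have : c₀ * (C * D) = C₁ * D + c₀ * D := by rw [hC]; field_simp
            nlinarith
        _ ≤ c₀ * L ^ p := by gcongr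
        -- Since `dim V ≤ i - 1`, the exponent `2m - dim V` is at least `p = 2m - i + 1`.
        _ ≤ c₀ * L ^ (2 * m - finrank ℝ V) := by
            have hle : p ≤ 2 * m - finrank ℝ V := by omega
            gcongr)
    exact (hBV v hvB (Submodule.subset_span ⟨hvΛ, hBL v hvB⟩)).not_ge
      (one_le_norm_of_mem_idealLattice K hvΛ hv0)
end

section
/- Let a : ℕ → ℂ be an arithmetic function with associated Dirichlet series A(s) = Σ_{n∈ℕ} a(n)n^{−s}. Let δ, C > 0 and λ > 2, and assume: (i) |a(n)| ≤ C·n^δ for all n ∈ ℕ; (ii) A(s) has an analytic continuation to the half-plane Re(s) > 1/2; (iii) |A(s)| ≤ C·(1+|Im(s)|)^{1/2} for Re(s) ≥ 1 − 1/λ. Then for all X ≥ 1 one has Σ_{n ≤ X} a(n) ≪ C·X^{1−1/(2λ)+2δ}, where the implicit constant may depend at most on λ and δ. -/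
/-!
The idea is to replace truncated Perron by the first Riesz mean. With `w y = max (1 - y) 0`, whose
Mellin transform is `1 / (s (s + 1))`, Mellin inversion gives
`∑ a n w (n / x) = (1 / 2πi) ∫ A s x ^ s / (s (s + 1)) ds` on a line `Re s = c > 1 + δ`
(`rieszMean_eq_integral`). The integrand is `O (|Im s| ^ (-3/2))` for `Re s ≥ σ := 1 - 1 / lam`, so
Cauchy's theorem moves the line to `Re s = σ` (`integral_vertical_shift`), where the integral
converges absolutely and the Riesz mean is `≪ C x ^ σ` (`norm_rieszMean_le`).

The function `R x = ∑ a n max (x - n) 0` is therefore `≪ C x ^ (1 + σ)`, and the partial sum is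
recovered from the difference `(R (X + Y) - R X) / Y` up to the terms with `X < n ≤ X + Y`, which
contribute `≪ C Y X ^ δ` (`norm_partialSum_mul_le`). The choice `Y = X ^ (1 - 1 / (2 lam))` makes
`X ^ (1 + σ) / Y = Y`, and the total is `≪ C X ^ (1 - 1 / (2 lam) + δ)`.
-/

/-! ### Shifting a vertical line of integration -/

open MeasureTheory Filter Topology Complex Set in
/-- Moving a vertical line of integration for a function holomorphic on `Re s > 1/2` that decays like
`|Im s| ^ (-3/2)` in the strip: the horizontal sides of the rectangles vanish in the limit. -/
theorem integral_vertical_shift {g : ℂ → ℂ} {σ c M : ℝ} (hσ : 1 / 2 < σ) (hσc : σ ≤ c)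
    (hg : DifferentiableOn ℂ g {s : ℂ | 1 / 2 < s.re})
    (hM : ∀ s : ℂ, σ ≤ s.re → s.re ≤ c → ‖g s‖ ≤ M * (1 + |s.im|) ^ (-(3 / 2) : ℝ)) :
    ∫ t : ℝ, g (c + t * I) = ∫ t : ℝ, g (σ + t * I) := by
  have hintg : ∀ r : ℝ, σ ≤ r → r ≤ c → Integrable (fun t : ℝ => g (r + t * I)) := by
    intro r h1 h2
    have hcont : Continuous (fun t : ℝ => g (r + t * I)) := by
      refine hg.continuousOn.comp_continuous (by fun_prop) fun t => ?_
      simp only [mem_ofPred_eq, add_re, ofReal_re, mul_re, I_re, I_im, ofReal_im]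
      linarith
    refine Integrable.mono' (((integrable_one_add_norm (E := ℝ) (μ := volume)
      (r := 3 / 2) (by simp; norm_num)).const_mul M)) hcont.aestronglyMeasurable ?_
    refine Eventually.of_forall fun t => ?_
    have := hM (r + t * I) (by simpa using h1) (by simpa using h2)
    simpa using this
  have hlim : ∀ r : ℝ, σ ≤ r → r ≤ c →
      Tendsto (fun T : ℝ => ∫ t in (-T)..T, g (r + t * I)) atTop (𝓝 (∫ t : ℝ, g (r + t * I))) :=
    fun r h1 h2 => intervalIntegral_tendsto_integral (hintg r h1 h2) tendsto_neg_atTop_atBot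
      tendsto_id
  have hdec : Tendsto (fun T : ℝ => M * (1 + |T|) ^ (-(3 / 2) : ℝ) * |c - σ|) atTop (𝓝 0) := by
    have h1 : Tendsto (fun T : ℝ => 1 + |T|) atTop atTop :=
      tendsto_atTop_add_const_left _ _ tendsto_abs_atTop_atTop
    have h2 := (tendsto_rpow_neg_atTop (y := 3 / 2) (by norm_num)).comp h1
    simpa using (h2.const_mul M).mul_const |c - σ|
  have hhor : ∀ ε : ℝ, |ε| = 1 →
      Tendsto (fun T : ℝ => ∫ x in σ..c, g (x + ((ε * T : ℝ) : ℂ) * I)) atTop (𝓝 0) := by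
    intro ε hε
    refine squeeze_zero_norm (fun T => ?_) hdec
    refine intervalIntegral.norm_integral_le_of_norm_le_const fun x hx => ?_
    rw [uIoc_of_le hσc] at hx
    have := hM (x + ((ε * T : ℝ) : ℂ) * I) (by simpa using hx.1.le) (by simpa using hx.2)
    simpa [abs_mul, hε] using this
  have hrect : ∀ T : ℝ, (∫ x in σ..c, g (x + (((-1) * T : ℝ) : ℂ) * I))
      - (∫ x in σ..c, g (x + ((1 * T : ℝ) : ℂ) * I))
      + I • (∫ t in (-T)..T, g (c + t * I)) - I • (∫ t in (-T)..T, g (σ + t * I)) = 0 := by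
    intro T
    have := integral_boundary_rect_eq_zero_of_differentiableOn g ⟨σ, -T⟩ ⟨c, T⟩
      (hg.mono fun s hs => ?_)
    · simpa using this
    · have h1 : s.re ∈ uIcc σ c := hs.1
      rw [uIcc_of_le hσc] at h1
      exact lt_of_lt_of_le hσ h1.1
  have hall := (((hhor (-1) (by simp)).sub (hhor 1 (by simp))).add
    ((hlim c hσc le_rfl).const_smul I)).sub ((hlim σ le_rfl hσc).const_smul I)
  have h0 := tendsto_nhds_unique hall
    (tendsto_const_nhds.congr fun T => (hrect T).symm)
  have h1 : I • ((∫ t : ℝ, g (c + t * I)) - ∫ t : ℝ, g (σ + t * I)) = 0 := by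
    rw [smul_sub, ← h0]; simp
  exact sub_eq_zero.1 ((smul_eq_zero.1 h1).resolve_left I_ne_zero)

/-! ### The Riesz kernel and its Mellin inversion -/

open Complex in
/-- The decay comes from `‖s + 1‖ ≥ ‖s‖` and `‖s‖ ^ 2 ≥ 1 / 4 + (Im s) ^ 2`. -/
theorem norm_rieszKernel_le {s : ℂ} (hs : 1 / 2 ≤ s.re) :
    ‖1 / (s * (s + 1))‖ ≤ 8 * (1 + |s.im|) ^ (-2 : ℝ) := by
  have h1 : ‖s‖ ^ 2 = s.re ^ 2 + s.im ^ 2 := by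
    rw [← normSq_eq_norm_sq, normSq_apply]; ring
  have h2 : ‖s‖ ≤ ‖s + 1‖ := by
    rw [← sq_le_sq₀ (norm_nonneg _) (norm_nonneg _), ← normSq_eq_norm_sq, ← normSq_eq_norm_sq,
      normSq_apply, normSq_apply]
    simp only [add_re, one_re, add_im, one_im]
    nlinarith
  have h3 : (1 + |s.im|) ^ 2 ≤ 8 * (‖s‖ * ‖s + 1‖) := by
    have h4 : ‖s‖ ^ 2 ≤ ‖s‖ * ‖s + 1‖ := by
      rw [sq]; exact mul_le_mul_of_nonneg_left h2 (norm_nonneg _)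
    have h5 := sq_abs s.im
    nlinarith [sq_nonneg (1 - |s.im|)]
  have h6 : 0 < (1 + |s.im|) ^ 2 := by positivity
  rw [Real.rpow_neg (by positivity), Real.rpow_ofNat, norm_div, norm_one, norm_mul,
    ← div_eq_mul_inv, div_le_div_iff₀ (by linarith) h6]
  linarith

open MeasureTheory Complex in
theorem integrable_rieszKernel {c : ℝ} (hc : 1 / 2 ≤ c) :
    Integrable (fun t : ℝ => 1 / (((c : ℂ) + t * I) * (c + t * I + 1))) := by
  have hc1 : Continuous (fun t : ℝ => 1 / (((c : ℂ) + t * I) * (c + t * I + 1))) := by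
    refine continuous_const.div (by fun_prop) fun t h => ?_
    rcases mul_eq_zero.1 h with h | h
    · have := congrArg re h; simp at this; linarith
    · have := congrArg re h; simp at this; linarith
  refine Integrable.mono' (((integrable_one_add_norm (E := ℝ) (μ := volume)
      (r := 2) (by simp)).const_mul 8)) hc1.aestronglyMeasurable ?_
  refine Filter.Eventually.of_forall fun t => ?_
  simpa using norm_rieszKernel_le (s := c + t * I) (by simpa using hc)

open MeasureTheory Complex Set in
/-- On `t > 0` the weight `max (1 - t) 0` is the difference of the indicator of `(0, 1]` and of `t`
restricted to `(0, 1]`, with Mellin transforms `1 / s` and `1 / (s + 1)`. -/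
theorem hasMellin_rieszWeight {s : ℂ} (hs : 0 < s.re) :
    HasMellin (fun t : ℝ => ((max (1 - t) 0 : ℝ) : ℂ)) s (1 / (s * (s + 1))) := by
  have h1 := hasMellin_one_Ioc hs
  have h2 := hasMellin_cpow_Ioc 1 (s := s) (by simp; linarith)
  have h3 := hasMellin_sub h1.1 h2.1
  have hs0 : s ≠ 0 := by rintro rfl; simp at hs
  have hs1 : s + 1 ≠ 0 := by
    intro h; have := congrArg re h; simp at this; linarith
  have h4 : (1 / s - 1 / (s + 1)) = 1 / (s * (s + 1)) := by field_simp; ring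
  rw [h1.2, h2.2, h4] at h3
  have hcongr : EqOn (fun t : ℝ => (t : ℂ) ^ (s - 1) •
      (indicator (Ioc 0 1) (fun _ => 1 : ℝ → ℂ) t
        - indicator (Ioc 0 1) (fun t => (t : ℂ) ^ (1 : ℂ) : ℝ → ℂ) t))
      (fun t : ℝ => (t : ℂ) ^ (s - 1) • ((max (1 - t) 0 : ℝ) : ℂ)) (Ioi 0) := by
    intro t ht
    have ht : 0 < t := ht
    by_cases h : t ≤ 1
    · have hmem : t ∈ Ioc (0 : ℝ) 1 := ⟨ht, h⟩
      simp [hmem, max_eq_left (sub_nonneg.2 h)]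
    · have hmem : t ∉ Ioc (0 : ℝ) 1 := fun h' => h h'.2
      simp [hmem, max_eq_right (sub_nonpos.2 (not_le.1 h).le)]
  exact ⟨h3.1.congr_fun hcongr measurableSet_Ioi,
    (setIntegral_congr_fun measurableSet_Ioi hcongr).symm.trans h3.2⟩

open MeasureTheory Complex in
theorem rieszWeight_eq_integral {c y : ℝ} (hc : 1 / 2 ≤ c) (hy : 0 < y) :
    ((max (1 - y) 0 : ℝ) : ℂ) = (1 / (2 * Real.pi)) •
      ∫ t : ℝ, (y : ℂ) ^ (-(c + t * I)) * (1 / ((c + t * I) * (c + t * I + 1))) := by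
  have hm : ∀ t : ℝ, mellin (fun t : ℝ => ((max (1 - t) 0 : ℝ) : ℂ)) (c + t * I)
      = 1 / ((c + t * I) * (c + t * I + 1)) :=
    fun t => (hasMellin_rieszWeight (by simp; linarith)).2
  have := mellinInv_mellin_eq c (fun t : ℝ => ((max (1 - t) 0 : ℝ) : ℂ)) hy
    (hasMellin_rieszWeight (by simp; linarith)).1
    (by simpa only [VerticalIntegrable, hm] using integrable_rieszKernel hc)
    (by fun_prop)
  rw [← this]
  simp only [mellinInv, hm, smul_eq_mul]

/-! ### The Riesz mean of a Dirichlet series -/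

open MeasureTheory Complex in
/-- Perron's formula for the first Riesz mean, on a line in the half-plane of absolute convergence. -/
theorem rieszMean_eq_integral {δ C c x : ℝ} {a : ℕ → ℂ} {A : ℂ → ℂ} (hδ : 0 < δ)
    (ha : ∀ n : ℕ, 1 ≤ n → ‖a n‖ ≤ C * (n : ℝ) ^ δ)
    (hA : ∀ s : ℂ, 1 + δ < s.re → A s = ∑' n : ℕ, a (n + 1) / ((n : ℂ) + 1) ^ s)
    (hc : 1 + δ < c) (hx : 0 < x) :
    ∑' n : ℕ, a (n + 1) * ((max (1 - ((n : ℝ) + 1) / x) 0 : ℝ) : ℂ) = (1 / (2 * Real.pi)) •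
      ∫ t : ℝ, A (c + t * I) * (x : ℂ) ^ ((c : ℂ) + t * I) *
        (1 / ((c + t * I) * (c + t * I + 1))) := by
  set k : ℝ → ℂ := fun t => 1 / (((c : ℂ) + t * I) * (c + t * I + 1)) with hk
  have hkint : Integrable k := integrable_rieszKernel (by linarith)
  set F : ℕ → ℝ → ℂ := fun n t =>
    a (n + 1) * (((((n : ℝ) + 1) / x : ℝ) : ℂ) ^ (-((c : ℂ) + t * I)) * k t) with hF
  have hy : ∀ n : ℕ, 0 < ((n : ℝ) + 1) / x := fun n => by positivity
  have hnorm : ∀ n t, ‖F n t‖ = ‖a (n + 1)‖ * (((n : ℝ) + 1) / x) ^ (-c) * ‖k t‖ := by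
    intro n t
    simp only [hF, norm_mul, norm_cpow_eq_rpow_re_of_pos (hy n)]
    simp [mul_assoc]
  have hFint : ∀ n, Integrable (F n) := by
    intro n
    have hcont : Continuous fun t : ℝ =>
        a (n + 1) * ((((n : ℝ) + 1) / x : ℝ) : ℂ) ^ (-((c : ℂ) + t * I)) := by
      refine continuous_const.mul (Continuous.const_cpow (by fun_prop) (Or.inl ?_))
      exact ofReal_ne_zero.2 (hy n).ne'
    refine Integrable.mono' (hkint.norm.const_mul (‖a (n + 1)‖ * (((n : ℝ) + 1) / x) ^ (-c)))
      ?_ (Filter.Eventually.of_forall fun t => (hnorm n t).le)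
    simp only [hF, ← mul_assoc]
    exact hcont.aestronglyMeasurable.mul hkint.1
  have hFsum : Summable fun n => ∫ t, ‖F n t‖ := by
    simp only [hnorm, integral_const_mul]
    refine Summable.mul_right _ ?_
    have hs : Summable fun n : ℕ => C * x ^ c * (((n + 1 : ℕ) : ℝ) ^ (-(c - δ))) := by
      refine Summable.mul_left _ ?_
      exact (summable_nat_add_iff 1).2 (Real.summable_nat_rpow.2 (by linarith))
    refine Summable.of_nonneg_of_le (fun n => by have := hy n; positivity) (fun n => ?_) hs
    have hn : (0 : ℝ) < (n : ℝ) + 1 := by positivity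
    have h1 := ha (n + 1) (by omega)
    push_cast at h1 ⊢
    have h2 : (((n : ℝ) + 1) / x) ^ (-c) = ((n : ℝ) + 1) ^ (-c) * x ^ c := by
      rw [Real.div_rpow hn.le hx.le, Real.rpow_neg hx.le, div_inv_eq_mul]
    have h3 : ((n : ℝ) + 1) ^ (-(c - δ)) = ((n : ℝ) + 1) ^ δ * ((n : ℝ) + 1) ^ (-c) := by
      rw [← Real.rpow_add hn]; ring_nf
    rw [h2, h3]
    calc ‖a (n + 1)‖ * (((n : ℝ) + 1) ^ (-c) * x ^ c)
        ≤ C * ((n : ℝ) + 1) ^ δ * (((n : ℝ) + 1) ^ (-c) * x ^ c) := by gcongr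
      _ = _ := by ring
  have key := (hasSum_integral_of_summable_integral_norm hFint hFsum).tsum_eq
  have hleft : ∀ n : ℕ, a (n + 1) * ((max (1 - ((n : ℝ) + 1) / x) 0 : ℝ) : ℂ)
      = (1 / (2 * Real.pi)) • ∫ t, F n t := by
    intro n
    rw [rieszWeight_eq_integral (c := c) (by linarith) (hy n), integral_const_mul,
      mul_smul_comm]
  have hright : ∀ t : ℝ, ∑' n, F n t = A (c + t * I) * (x : ℂ) ^ ((c : ℂ) + t * I) * k t := by
    intro t
    rw [hA _ (by simpa using hc), mul_assoc, ← tsum_mul_right]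
    refine tsum_congr fun n => ?_
    have h1 : ((n : ℂ) + 1) ^ ((c : ℂ) + t * I)
        = ((((n : ℝ) + 1) / x : ℝ) : ℂ) ^ ((c : ℂ) + t * I) * (x : ℂ) ^ ((c : ℂ) + t * I) := by
      rw [← mul_cpow_ofReal_nonneg (hy n).le hx.le, ← ofReal_mul, div_mul_cancel₀ _ hx.ne']
      push_cast; rfl
    have h2 : ((((n : ℝ) + 1) / x : ℝ) : ℂ) ^ ((c : ℂ) + t * I) ≠ 0 :=
      fun h => (hy n).ne' (ofReal_eq_zero.1 ((cpow_eq_zero_iff _ _).1 h).1)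
    have h3 : (x : ℂ) ^ ((c : ℂ) + t * I) ≠ 0 :=
      fun h => hx.ne' (ofReal_eq_zero.1 ((cpow_eq_zero_iff _ _).1 h).1)
    simp only [hF]
    rw [h1, cpow_neg]
    field_simp
  simp only [hleft, tsum_const_smul'']
  rw [key]
  simp only [hright, hk]

open MeasureTheory Complex in
/-- The Riesz mean is bounded by moving the line of integration from `Re s = 2 + δ` to `Re s = σ`. -/
theorem norm_rieszMean_le {δ C σ x : ℝ} {a : ℕ → ℂ} {A : ℂ → ℂ} (hδ : 0 < δ) (hC : 0 < C)
    (hσ : 1 / 2 < σ) (hσ1 : σ ≤ 1)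
    (ha : ∀ n : ℕ, 1 ≤ n → ‖a n‖ ≤ C * (n : ℝ) ^ δ)
    (hdiff : DifferentiableOn ℂ A {s : ℂ | 1 / 2 < s.re})
    (hA : ∀ s : ℂ, 1 + δ < s.re → A s = ∑' n : ℕ, a (n + 1) / ((n : ℂ) + 1) ^ s)
    (hbd : ∀ s : ℂ, σ ≤ s.re → ‖A s‖ ≤ C * (1 + |s.im|) ^ ((1 : ℝ) / 2)) (hx : 1 ≤ x) :
    ‖∑' n : ℕ, a (n + 1) * ((max (1 - ((n : ℝ) + 1) / x) 0 : ℝ) : ℂ)‖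
      ≤ 8 * (∫ t : ℝ, (1 + |t|) ^ (-(3 / 2) : ℝ)) * C * x ^ σ := by
  have hx0 : 0 < x := by linarith
  set g : ℂ → ℂ := fun s => A s * (x : ℂ) ^ s * (1 / (s * (s + 1))) with hg
  have hgdiff : DifferentiableOn ℂ g {s : ℂ | 1 / 2 < s.re} := by
    have hpow : Differentiable ℂ fun s : ℂ => (x : ℂ) ^ s := fun s =>
      (differentiableAt_id).const_cpow (Or.inl (ofReal_ne_zero.2 hx0.ne'))
    refine (hdiff.mul hpow.differentiableOn).mul
      ((differentiableOn_const 1).div (by fun_prop) fun s hs h => ?_)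
    have hs : 1 / 2 < s.re := hs
    rcases mul_eq_zero.1 h with h | h
    · have := congrArg re h; simp at this; linarith
    · have := congrArg re h; simp at this; linarith
  have hgb : ∀ s : ℂ, σ ≤ s.re →
      ‖g s‖ ≤ 8 * C * x ^ s.re * (1 + |s.im|) ^ (-(3 / 2) : ℝ) := by
    intro s hs
    have hpos : 0 < 1 + |s.im| := by positivity
    have e : (1 + |s.im|) ^ (-(3 / 2) : ℝ)
        = (1 + |s.im|) ^ ((1 : ℝ) / 2) * (1 + |s.im|) ^ (-2 : ℝ) := by
      rw [← Real.rpow_add hpos]; norm_num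
    rw [e, hg]
    simp only [norm_mul, norm_cpow_eq_rpow_re_of_pos hx0]
    calc _ ≤ C * (1 + |s.im|) ^ ((1 : ℝ) / 2) * x ^ s.re * (8 * (1 + |s.im|) ^ (-2 : ℝ)) := by
          gcongr
          · exact hbd s hs
          · exact norm_rieszKernel_le (by linarith)
      _ = _ := by ring
  have hshift := integral_vertical_shift (g := g) (c := 2 + δ) (M := 8 * C * x ^ (2 + δ)) hσ
    (by linarith) hgdiff fun s h1 h2 => (hgb s h1).trans (by gcongr)
  rw [rieszMean_eq_integral (c := 2 + δ) hδ ha hA (by linarith) hx0]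
  change ‖(1 / (2 * Real.pi)) • ∫ t : ℝ, g (((2 + δ : ℝ) : ℂ) + t * I)‖ ≤ _
  rw [hshift, norm_smul]
  have hintg : Integrable fun t : ℝ => (1 + |t|) ^ (-(3 / 2) : ℝ) := by
    simpa using integrable_one_add_norm (E := ℝ) (μ := volume) (r := 3 / 2) (by simp; norm_num)
  have h1 : ‖∫ t : ℝ, g (σ + t * I)‖ ≤ ∫ t : ℝ, 8 * C * x ^ σ * (1 + |t|) ^ (-(3 / 2) : ℝ) := by
    refine norm_integral_le_of_norm_le (hintg.const_mul _)
      (Filter.Eventually.of_forall fun t => ?_)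
    simpa using hgb (σ + t * I) (by simp)
  have h2 : ‖1 / (2 * Real.pi)‖ ≤ 1 := by
    have := Real.pi_gt_three
    rw [Real.norm_of_nonneg (by positivity), div_le_one (by positivity)]
    linarith
  calc _ ≤ 1 * ‖∫ t : ℝ, g (σ + t * I)‖ := by gcongr
    _ ≤ ∫ t : ℝ, 8 * C * x ^ σ * (1 + |t|) ^ (-(3 / 2) : ℝ) := by rwa [one_mul]
    _ = _ := by rw [integral_const_mul]; ring

/-! ### From Riesz means to partial sums -/

theorem mul_rieszMean_eq_sum {x : ℝ} (hx : 0 < x) (a : ℕ → ℂ) {N : ℕ} (hN : ⌊x⌋₊ ≤ N) :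
    (x : ℂ) * ∑' n : ℕ, a (n + 1) * ((max (1 - ((n : ℝ) + 1) / x) 0 : ℝ) : ℂ)
      = ∑ n ∈ Finset.Icc 1 N, a n * ((max (x - n) 0 : ℝ) : ℂ) := by
  have hterm : ∀ n : ℕ, x * max (1 - ((n : ℝ) + 1) / x) 0 = max (x - ((n + 1 : ℕ) : ℝ)) 0 := by
    intro n
    rw [mul_max_of_nonneg _ _ hx.le, mul_zero, mul_sub, mul_div_cancel₀ _ hx.ne']
    push_cast; ring_nf
  rw [← tsum_mul_left, tsum_eq_sum (s := Finset.range N), ← Finset.Ico_succ_right_eq_Icc,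
    Finset.sum_Ico_eq_sum_range]
  · refine Finset.sum_congr (by simp) fun n _ => ?_
    rw [add_comm 1 n, ← hterm]; push_cast; ring
  · intro n hn
    have h1 : x < ((n + 1 : ℕ) : ℝ) :=
      (Nat.floor_lt hx.le).1 (by have := Finset.mem_range.not.1 hn; omega)
    have h2 : max (1 - ((n : ℝ) + 1) / x) 0 = 0 := by
      refine max_eq_right (sub_nonpos.2 ((one_le_div hx).2 ?_))
      push_cast at h1; exact h1.le
    rw [h2]; simp

/-- The sum up to `X`, scaled by `Y`, is a difference of two unnormalized Riesz means up to the terms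
in the window `X < n ≤ X + Y`. There are at most `Y + 1 ≤ 2 Y` of these, each of weight at most
`Y`. -/
theorem norm_partialSum_mul_le {X Y B : ℝ} (hX : 1 ≤ X) (hY : 1 ≤ Y) (a : ℕ → ℂ)
    (hB : ∀ n : ℕ, 1 ≤ n → (n : ℝ) ≤ X + Y → ‖a n‖ ≤ B) :
    Y * ‖∑ n ∈ Finset.Icc 1 ⌊X⌋₊, a n‖ ≤
      (X + Y) * ‖∑' n : ℕ, a (n + 1) * ((max (1 - ((n : ℝ) + 1) / (X + Y)) 0 : ℝ) : ℂ)‖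
      + X * ‖∑' n : ℕ, a (n + 1) * ((max (1 - ((n : ℝ) + 1) / X) 0 : ℝ) : ℂ)‖
      + 2 * Y * (Y * B) := by
  set N := ⌊X + Y⌋₊ with hNdef
  have hMN : ⌊X⌋₊ ≤ N := Nat.floor_le_floor (by linarith)
  have hB0 : 0 ≤ B := (norm_nonneg _).trans (hB 1 le_rfl (by push_cast; linarith))
  set W : ℂ := ∑ n ∈ Finset.Ioc ⌊X⌋₊ N, a n * ((X + Y - n : ℝ) : ℂ) with hW
  have hWle : ‖W‖ ≤ 2 * Y * (Y * B) := by
    have h1 : ∀ n ∈ Finset.Ioc ⌊X⌋₊ N, ‖a n * ((X + Y - n : ℝ) : ℂ)‖ ≤ Y * B := by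
      intro n hn
      obtain ⟨hn1, hn2⟩ := Finset.mem_Ioc.1 hn
      have h2 : X < n := (Nat.floor_lt (by linarith)).1 hn1
      have h3 : (n : ℝ) ≤ X + Y := (Nat.le_floor_iff (by linarith)).1 hn2
      rw [norm_mul, Complex.norm_real, Real.norm_of_nonneg (by linarith), mul_comm Y]
      exact mul_le_mul (hB n (by omega) h3) (by linarith) (by linarith) hB0
    have h2 : ((Finset.Ioc ⌊X⌋₊ N).card : ℝ) ≤ 2 * Y := by
      rw [Nat.card_Ioc, Nat.cast_sub hMN]
      have := Nat.floor_le (a := X + Y) (by linarith)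
      have := Nat.lt_floor_add_one X
      linarith
    calc ‖W‖ ≤ ∑ n ∈ Finset.Ioc ⌊X⌋₊ N, Y * B := norm_sum_le_of_le _ h1
      _ = (Finset.Ioc ⌊X⌋₊ N).card * (Y * B) := by rw [Finset.sum_const, nsmul_eq_mul]
      _ ≤ _ := by gcongr
  have hsplit : ∑ n ∈ Finset.Icc 1 N, a n * ((max (X + Y - n) 0 : ℝ) : ℂ)
      - ∑ n ∈ Finset.Icc 1 N, a n * ((max (X - n) 0 : ℝ) : ℂ)
      = Y * ∑ n ∈ Finset.Icc 1 ⌊X⌋₊, a n + W := by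
    have hIcc : ∀ m : ℕ, Finset.Icc 1 m = Finset.Ioc 0 m := fun m => by ext; simp; omega
    rw [← Finset.sum_sub_distrib, hIcc, hIcc,
      ← Finset.sum_Ioc_consecutive _ (Nat.zero_le ⌊X⌋₊) hMN, Finset.mul_sum]
    congr 1
    · refine Finset.sum_congr rfl fun n hn => ?_
      have h2 : (n : ℝ) ≤ X := (Nat.le_floor_iff (by linarith)).1 (Finset.mem_Ioc.1 hn).2
      rw [max_eq_left (by linarith), max_eq_left (by linarith)]
      push_cast; ring
    · refine Finset.sum_congr rfl fun n hn => ?_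
      obtain ⟨hn1, hn2⟩ := Finset.mem_Ioc.1 hn
      have h2 : X < n := (Nat.floor_lt (by linarith)).1 hn1
      have h3 : (n : ℝ) ≤ X + Y := (Nat.le_floor_iff (by linarith)).1 hn2
      rw [max_eq_left (by linarith), max_eq_right (by linarith)]
      simp
  rw [← mul_rieszMean_eq_sum (by linarith) a le_rfl,
    ← mul_rieszMean_eq_sum (by linarith) a hMN] at hsplit
  have h4 := congrArg norm (eq_sub_of_add_eq hsplit.symm)
  rw [norm_mul, Complex.norm_real, Real.norm_of_nonneg (by linarith)] at h4
  rw [h4]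
  refine (norm_sub_le _ _).trans (add_le_add ((norm_sub_le _ _).trans_eq ?_) hWle)
  rw [norm_mul, norm_mul, Complex.norm_real, Complex.norm_real,
    Real.norm_of_nonneg (by linarith), Real.norm_of_nonneg (by linarith)]

/-- **Truncated Perron-type bound.** Let `a : ℕ → ℂ` with associated Dirichlet series
`A(s) = ∑_{n ≥ 1} a(n) n^{−s}`. Let `δ, C > 0` and `λ > 2`, and assume
(i) `|a n| ≤ C n^δ`; (ii) `A` has an analytic continuation to `Re s > 1/2`
(formalized: there is a function `A`, holomorphic on `Re s > 1/2`, agreeing with the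
absolutely convergent Dirichlet series on `Re s > 1 + δ`);
(iii) `|A s| ≤ C (1 + |Im s|)^{1/2}` for `Re s ≥ 1 − 1/λ`. Then
`∑_{n ≤ X} a n ≪_{λ,δ} C X^{1−1/(2λ)+2δ}` for `X ≥ 1`. -/
theorem dirichlet_series_partial_sum_bound
    (δ lam : ℝ) (hδ : 0 < δ) (hlam : 2 < lam) :
    ∃ K : ℝ, 0 < K ∧ ∀ (C : ℝ), 0 < C → ∀ (a : ℕ → ℂ) (A : ℂ → ℂ),
      (∀ n : ℕ, 1 ≤ n → ‖a n‖ ≤ C * (n : ℝ) ^ δ) →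
      DifferentiableOn ℂ A {s : ℂ | 1 / 2 < s.re} →
      (∀ s : ℂ, 1 + δ < s.re → A s = ∑' n : ℕ, a (n + 1) / ((n : ℂ) + 1) ^ s) →
      (∀ s : ℂ, 1 - 1 / lam ≤ s.re → ‖A s‖ ≤ C * (1 + |s.im|) ^ ((1 : ℝ) / 2)) →
      ∀ X : ℝ, 1 ≤ X →
        ‖∑ n ∈ Finset.Icc 1 ⌊X⌋₊, a n‖ ≤ K * C * X ^ (1 - 1 / (2 * lam) + 2 * δ) := by
  set J : ℝ := ∫ t : ℝ, (1 + |t|) ^ (-(3 / 2) : ℝ) with hJ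
  have hJ0 : 0 ≤ J := MeasureTheory.integral_nonneg fun t => by positivity
  refine ⟨40 * J + 2 * 2 ^ δ, by positivity, fun C hC a A ha hdiff hA hbd X hX => ?_⟩
  have hlam1 : 1 / lam < 1 / 2 := one_div_lt_one_div_of_lt (by norm_num) hlam
  have hlam0 : 0 < 1 / lam := by positivity
  have hhalf : 1 / (2 * lam) = 1 / lam / 2 := by field_simp
  set σ : ℝ := 1 - 1 / lam with hσ
  set θ : ℝ := 1 - 1 / (2 * lam) with hθ
  have hX0 : 0 < X := by linarith
  -- The window length balances `X ^ (1 + σ) / Y` against `Y`.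
  set Y : ℝ := X ^ θ with hY
  have hY1 : 1 ≤ Y := Real.one_le_rpow hX (by linarith)
  have hYX : Y ≤ X := by
    calc Y ≤ X ^ (1 : ℝ) := Real.rpow_le_rpow_of_exponent_le hX (by linarith)
      _ = X := Real.rpow_one X
  have hYY : X * X ^ σ = Y * Y := by
    rw [hY, ← Real.rpow_add hX0, ← Real.rpow_one_add' hX0.le (by linarith)]
    congr 1; linarith
  have hR : ∀ x : ℝ, 1 ≤ x → _ := fun x hx =>
    norm_rieszMean_le hδ hC (by linarith : 1 / 2 < σ) (by linarith) ha hdiff hA hbd hx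
  have hB : ∀ n : ℕ, 1 ≤ n → (n : ℝ) ≤ X + Y → ‖a n‖ ≤ C * (2 ^ δ * X ^ δ) := by
    intro n hn hnX
    rw [← Real.mul_rpow (by norm_num) hX0.le]
    refine (ha n hn).trans ?_
    gcongr
    linarith
  have hmain := norm_partialSum_mul_le hX hY1 a hB
  have hpow : (X + Y) ^ σ ≤ 2 * X ^ σ := by
    calc (X + Y) ^ σ ≤ (2 * X) ^ σ := Real.rpow_le_rpow (by linarith) (by linarith) (by linarith)
      _ = 2 ^ σ * X ^ σ := Real.mul_rpow (by norm_num) hX0.le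
      _ ≤ 2 ^ (1 : ℝ) * X ^ σ := by gcongr <;> linarith
      _ = 2 * X ^ σ := by rw [Real.rpow_one]
  have h1 : (X + Y) * ‖∑' n : ℕ, a (n + 1) * ((max (1 - ((n : ℝ) + 1) / (X + Y)) 0 : ℝ) : ℂ)‖
      ≤ (2 * X) * (8 * J * C * (2 * X ^ σ)) := by
    refine mul_le_mul (by linarith) ((hR _ (by linarith)).trans ?_) (norm_nonneg _) (by linarith)
    gcongr
  have h2 : X * ‖∑' n : ℕ, a (n + 1) * ((max (1 - ((n : ℝ) + 1) / X) 0 : ℝ) : ℂ)‖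
      ≤ X * (8 * J * C * X ^ σ) := mul_le_mul_of_nonneg_left (hR X hX) hX0.le
  have h3 : Y * ‖∑ n ∈ Finset.Icc 1 ⌊X⌋₊, a n‖
      ≤ Y * (40 * J * C * Y + 2 * 2 ^ δ * C * (Y * X ^ δ)) := by
    refine hmain.trans ((add_le_add (add_le_add h1 h2) le_rfl).trans_eq ?_)
    linear_combination (40 * J * C) * hYY
  have h4 := le_of_mul_le_mul_left h3 (by linarith)
  have h5 : Y ≤ X ^ (θ + 2 * δ) := Real.rpow_le_rpow_of_exponent_le hX (by linarith)
  have h6 : Y * X ^ δ ≤ X ^ (θ + 2 * δ) := by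
    rw [hY, ← Real.rpow_add hX0]
    exact Real.rpow_le_rpow_of_exponent_le hX (by linarith)
  calc _ ≤ _ := h4
    _ ≤ 40 * J * C * X ^ (θ + 2 * δ) + 2 * 2 ^ δ * C * X ^ (θ + 2 * δ) := by gcongr
    _ = _ := by ring
end

section
/- Let g, ω : ℕ → ℂ be functions and write G(u) := Σ_{n ≤ u} g(n). Let X ≥ 1 and A, B ≥ 0 with A + B < 1, and assume: (1) ω(n) = 0 for all n ≥ X; (2) there is Q ≥ 0 such that |ω(n) − ω(n+1)| ≤ Q·n^{−B} for all n ∈ ℕ; (3) there are λ₀ ∈ ℂ and M ≥ 0 such that |G(n) − λ₀| ≤ M·n^{−A} for all n ∈ ℕ. Then |Σ_{n ≤ X} g(n)ω(n) − λ₀·ω(1)| ≤ M·Q·(1 + X^{1−A−B}/(1−A−B)). -/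
/-! Summation by parts rewrites the quantity to be bounded as
`∑_{n ≤ N} (G n - lam) (ω n - ω (n + 1)) + (G N - lam) ω (N + 1)` with `N = ⌊X⌋₊`. The boundary term
vanishes since `N + 1 > X`, and the `n`-th summand is at most `M Q n^{-(A + B)}`. Finally
`∑_{n ≤ N} n^{-s} ≤ N^{1 - s} / (1 - s)` for `0 ≤ s < 1`, by Bernoulli's inequality for exponents in
`[0, 1]`.
-/

lemma sum_mul_sub_eq_sum_by_parts (g ω : ℕ → ℂ) (lam : ℂ) (N : ℕ) :
    (∑ n ∈ Finset.Icc 1 N, g n * ω n) - lam * ω 1 =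
      (∑ n ∈ Finset.Icc 1 N, ((∑ k ∈ Finset.Icc 1 n, g k) - lam) * (ω n - ω (n + 1))) +
        ((∑ k ∈ Finset.Icc 1 N, g k) - lam) * ω (N + 1) := by
  induction N with
  | zero => simp
  | succ N ih =>
    have h : 1 ≤ N + 1 := by lia
    rw [Finset.sum_Icc_succ_top h, Finset.sum_Icc_succ_top h, Finset.sum_Icc_succ_top h]
    linear_combination ih

/-- One step of the comparison of `∑ n^{-s}` with `∫ x^{-s}`. -/
lemma rpow_add_mul_rpow_neg_le (s : ℝ) (hs0 : 0 ≤ s) (hs1 : s < 1) (n : ℕ) :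
    (n : ℝ) ^ (1 - s) + (1 - s) * ((n : ℝ) + 1) ^ (-s) ≤ ((n : ℝ) + 1) ^ (1 - s) := by
  have hn : (0 : ℝ) ≤ n := n.cast_nonneg
  have hy : (0 : ℝ) < (n : ℝ) + 1 := by positivity
  have hpow : ((n : ℝ) + 1) ^ (1 - s) = ((n : ℝ) + 1) * ((n : ℝ) + 1) ^ (-s) := by
    rw [sub_eq_add_neg, Real.rpow_add hy, Real.rpow_one]
  have hb : -1 ≤ -1 / ((n : ℝ) + 1) := by
    rw [le_div_iff₀ hy]; linarith
  -- Bernoulli at `-1 / (n + 1)` bounds `(n / (n + 1)) ^ (1 - s)`.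
  have hber := rpow_one_add_le_one_add_mul_self hb (p := 1 - s) (by linarith) (by linarith)
  have hfrac : 1 + -1 / ((n : ℝ) + 1) = n / ((n : ℝ) + 1) := by field_simp; ring
  rw [hfrac, Real.div_rpow hn hy.le, div_le_iff₀ (Real.rpow_pos_of_pos hy _)] at hber
  have : (1 + (1 - s) * (-1 / ((n : ℝ) + 1))) * ((n : ℝ) + 1) ^ (1 - s) =
      ((n : ℝ) + 1) ^ (1 - s) - (1 - s) * ((n : ℝ) + 1) ^ (-s) := by
    rw [hpow]; field_simp
    ring
  linarith

lemma sum_rpow_neg_le (s : ℝ) (hs0 : 0 ≤ s) (hs1 : s < 1) (N : ℕ) :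
    ∑ n ∈ Finset.Icc 1 N, (n : ℝ) ^ (-s) ≤ (N : ℝ) ^ (1 - s) / (1 - s) := by
  have hs : 0 < 1 - s := by linarith
  rw [le_div_iff₀ hs]
  induction N with
  | zero => simp [Real.zero_rpow hs.ne']
  | succ N ih =>
    rw [Finset.sum_Icc_succ_top (by lia)]
    push_cast
    linarith [rpow_add_mul_rpow_neg_le s hs0 hs1 N]

/-- **Abel summation (discrete form).** Let `g, ω : ℕ → ℂ` and let `G u = ∑_{n ≤ u} g n`
(sum over positive integers `n ≤ u`). Let `X ≥ 1`, `A, B ≥ 0` with `A + B < 1`. Assume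
(1) `ω n = 0` for `n ≥ X`; (2) `|ω n − ω (n+1)| ≤ Q n^{−B}` for all `n ≥ 1`;
(3) `|G n − λ₀| ≤ M n^{−A}` for all `n ≥ 1`.
Then `|∑_{n ≤ X} g n ω n − λ₀ ω 1| ≤ M Q (1 + X^{1−A−B}/(1−A−B))`. -/
theorem abel_summation_discrete
    (g ω : ℕ → ℂ) (G : ℕ → ℂ) (hG : ∀ n : ℕ, G n = ∑ k ∈ Finset.Icc 1 n, g k)
    (X : ℝ) (hX : 1 ≤ X) (A B : ℝ) (hA : 0 ≤ A) (hB : 0 ≤ B) (hAB : A + B < 1)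
    (h1 : ∀ n : ℕ, X ≤ (n : ℝ) → ω n = 0)
    (Q : ℝ) (hQ : 0 ≤ Q)
    (h2 : ∀ n : ℕ, 1 ≤ n → ‖ω n - ω (n + 1)‖ ≤ Q * (n : ℝ) ^ (-B))
    (lam : ℂ) (M : ℝ) (hM : 0 ≤ M)
    (h3 : ∀ n : ℕ, 1 ≤ n → ‖G n - lam‖ ≤ M * (n : ℝ) ^ (-A)) :
    ‖(∑ n ∈ Finset.Icc 1 ⌊X⌋₊, g n * ω n) - lam * ω 1‖ ≤
      M * Q * (1 + X ^ (1 - A - B) / (1 - A - B)) := by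
  have hX0 : 0 ≤ X := by linarith
  have hω : ω (⌊X⌋₊ + 1) = 0 := h1 _ (by push_cast; exact (Nat.lt_floor_add_one X).le)
  rw [sum_mul_sub_eq_sum_by_parts, hω, mul_zero, add_zero]
  have hterm : ∀ n ∈ Finset.Icc 1 ⌊X⌋₊,
      ‖((∑ k ∈ Finset.Icc 1 n, g k) - lam) * (ω n - ω (n + 1))‖ ≤
        M * Q * (n : ℝ) ^ (-(A + B)) := by
    intro n hn
    have hn1 : 1 ≤ n := (Finset.mem_Icc.mp hn).1
    have hnpos : (0 : ℝ) < n := by exact_mod_cast hn1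
    rw [← hG, norm_mul, neg_add, Real.rpow_add hnpos]
    calc ‖G n - lam‖ * ‖ω n - ω (n + 1)‖
        ≤ (M * (n : ℝ) ^ (-A)) * (Q * (n : ℝ) ^ (-B)) :=
          mul_le_mul (h3 n hn1) (h2 n hn1) (norm_nonneg _) (by positivity)
      _ = M * Q * ((n : ℝ) ^ (-A) * (n : ℝ) ^ (-B)) := by ring
  have hs : 0 < 1 - A - B := by linarith
  have hsum : ∑ n ∈ Finset.Icc 1 ⌊X⌋₊, (n : ℝ) ^ (-(A + B)) ≤
      X ^ (1 - A - B) / (1 - A - B) := by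
    have h := sum_rpow_neg_le (A + B) (by linarith) hAB ⌊X⌋₊
    rw [← sub_sub] at h
    refine h.trans ?_
    gcongr
    exact Nat.floor_le hX0
  refine (norm_sum_le_of_le _ hterm).trans ?_
  rw [← Finset.mul_sum]
  gcongr
  linarith
end

section
/- Let 𝔯, 𝔞 be nonzero integral ideals of O_K with 𝔯 | 𝔞, and let (σ̃,τ̃) ∈ 𝔯² be such that σ̃O_K + τ̃O_K + 𝔞 = 𝔯. Then there exists (σ,τ) ∈ 𝔯² satisfying (σ,τ) ≡ (σ̃,τ̃) mod 𝔞 and σO_K + τO_K = 𝔯. -/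
/-!
Shift `σ'` by an element of `𝔞`, if necessary, to get `σ ≠ 0`. Since the ring of integers is a
Dedekind domain, `σO_K + 𝔞 = σO_K + bO_K` for some `b ∈ 𝔞`, and `τ = τ' + cb` works for a suitable
`c`. Indeed `σO_K + τO_K` is contained in `𝔯`, and if the inclusion is strict then both generators
lie in `𝔯P` for some prime `P ∣ σ`. Only finitely many primes divide `σ`, so the Chinese remainder
theorem gives a `c` with, for each such `P`, `c ≡ 0 mod P` if `τ' ∉ 𝔯P` and `c ≡ 1 mod P`
otherwise. In the first case `cb ∈ 𝔯P`, hence `τ ∉ 𝔯P`. In the second case `τ ∈ 𝔯P` would give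
`b ∈ 𝔯P`, so `σ`, `τ'` and `b` would all lie in `𝔯P`, although they generate `𝔯`.
-/

open IsDedekindDomain in
/-- In a Dedekind domain, modulo a nonzero ideal `I`, an ideal generated by two elements `t`, `b`
is generated by a single element of the form `t + c * b`. -/
lemma exists_sup_span_add_mul_eq {R : Type*} [CommRing R] [IsDedekindDomain R]
    {I r : Ideal R} (hI : I ≠ ⊥) {t b : R}
    (h : I ⊔ Ideal.span {t} ⊔ Ideal.span {b} = r) :
    ∃ c : R, I ⊔ Ideal.span {t + c * b} = r := by
  classical
  have hIr : I ≤ r := h ▸ le_sup_left.trans le_sup_left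
  have ht : t ∈ r := h ▸ Ideal.mem_sup_left (Ideal.mem_sup_right (Ideal.mem_span_singleton_self t))
  have hb : b ∈ r := h ▸ Ideal.mem_sup_right (Ideal.mem_span_singleton_self b)
  have hr : r ≠ ⊥ := fun h0 => hI (le_bot_iff.mp (h0 ▸ hIr))
  have hfin : {v : HeightOneSpectrum R | v.asIdeal ∣ I}.Finite := Ideal.finite_factors hI
  obtain ⟨c, hc⟩ := IsDedekindDomain.exists_forall_sub_mem_ideal (s := hfin.toFinset)
    (fun v : HeightOneSpectrum R => v.asIdeal) (fun _ => 1) (fun v _ => v.prime)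
    (fun v _ w _ hvw => fun h' => hvw (HeightOneSpectrum.ext h'))
    (fun v => if t ∈ r * v.1.asIdeal then 1 else 0)
  refine ⟨c, ?_⟩
  have hle : I ⊔ Ideal.span {t + c * b} ≤ r :=
    sup_le hIr ((Ideal.span_singleton_le_iff_mem _).mpr (r.add_mem ht (r.mul_mem_left c hb)))
  obtain ⟨M, hM⟩ := Ideal.dvd_iff_le.mpr hle
  by_cases hMtop : M = ⊤
  · rw [hM, hMtop, Ideal.mul_top]
  exfalso
  obtain ⟨P, hPmax, hMP⟩ := Ideal.exists_le_maximal M hMtop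
  have hLP : I ⊔ Ideal.span {t + c * b} ≤ r * P := hM ▸ Ideal.mul_mono_right hMP
  have hIP : I ≤ r * P := le_sup_left.trans hLP
  have hs : t + c * b ∈ r * P := hLP (Ideal.mem_sup_right (Ideal.mem_span_singleton_self _))
  have hIP' : I ≤ P := hIP.trans Ideal.mul_le_right
  have hPne : P ≠ ⊥ := fun h0 => hI (le_bot_iff.mp (h0 ▸ hIP'))
  have hcP := hc ⟨P, hPmax.isPrime, hPne⟩ (hfin.mem_toFinset.mpr (Ideal.dvd_iff_le.mpr hIP'))
  simp only [pow_one] at hcP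
  split_ifs at hcP with htP
  · have hcb : c * b ∈ r * P := (Ideal.add_mem_iff_right _ htP).mp hs
    have hbP : b ∈ r * P := by
      have h1 : b * (c - 1) ∈ r * P := Ideal.mul_mem_mul hb hcP
      have h2 := (r * P).sub_mem hcb h1
      rwa [show c * b - b * (c - 1) = b by ring] at h2
    have hrP : r ≤ r * P := by
      conv_lhs => rw [← h]
      exact sup_le (sup_le hIP ((Ideal.span_singleton_le_iff_mem _).mpr htP))
        ((Ideal.span_singleton_le_iff_mem _).mpr hbP)
    have hrP' : r * P = r * 1 := by rw [mul_one]; exact le_antisymm Ideal.mul_le_left hrP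
    exact hPmax.ne_top (by simpa using mul_left_cancel₀ hr hrP')
  · rw [sub_zero] at hcP
    have hcb : c * b ∈ r * P := mul_comm b c ▸ Ideal.mul_mem_mul hb hcP
    exact htP ((Ideal.add_mem_iff_left _ hcb).mp hs)

open NumberField

/-- Let `𝔯 | 𝔞` be nonzero integral ideals of `O_K` and `(σ̃,τ̃) ∈ 𝔯²` with
`σ̃O_K + τ̃O_K + 𝔞 = 𝔯`. Then there is `(σ,τ) ∈ 𝔯²` with `(σ,τ) ≡ (σ̃,τ̃) mod 𝔞`
and `σO_K + τO_K = 𝔯`. -/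
theorem exists_coprime_pair_congruent (K : Type*) [Field K] [NumberField K]
    (𝔯 𝔞 : Ideal (𝓞 K)) (h𝔯 : 𝔯 ≠ ⊥) (h𝔞 : 𝔞 ≠ ⊥) (hdvd : 𝔯 ∣ 𝔞)
    (σ' τ' : 𝓞 K) (hσ' : σ' ∈ 𝔯) (hτ' : τ' ∈ 𝔯)
    (h : Ideal.span {σ'} ⊔ Ideal.span {τ'} ⊔ 𝔞 = 𝔯) :
    ∃ σ τ : 𝓞 K, σ ∈ 𝔯 ∧ τ ∈ 𝔯 ∧ σ - σ' ∈ 𝔞 ∧ τ - τ' ∈ 𝔞 ∧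
      Ideal.span {σ} ⊔ Ideal.span {τ} = 𝔯 := by
  have hle : 𝔞 ≤ 𝔯 := Ideal.dvd_iff_le.mp hdvd
  obtain ⟨σ, hσ0, hσ⟩ : ∃ σ : 𝓞 K, σ ≠ 0 ∧ σ - σ' ∈ 𝔞 := by
    by_cases h0 : σ' = 0
    · obtain ⟨a, ha, ha0⟩ := Submodule.exists_mem_ne_zero_of_ne_bot h𝔞
      exact ⟨a, ha0, by simpa [h0] using ha⟩
    · exact ⟨σ', h0, by simp⟩
  have hI : Ideal.span {σ} ≠ ⊥ := by simpa using hσ0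
  have hσσ' : Ideal.span {σ} ⊔ 𝔞 = Ideal.span {σ'} ⊔ 𝔞 := by
    apply le_antisymm <;> refine sup_le ((Ideal.span_singleton_le_iff_mem _).mpr ?_) le_sup_right
    · exact Submodule.mem_sup.mpr
        ⟨σ', Ideal.mem_span_singleton_self _, σ - σ', hσ, by ring⟩
    · exact Submodule.mem_sup.mpr
        ⟨σ, Ideal.mem_span_singleton_self _, -(σ - σ'), 𝔞.neg_mem hσ, by ring⟩
  obtain ⟨b₀, hb₀⟩ := IsDedekindDomain.exists_sup_span_eq
    (I := Ideal.span {σ}) (J := Ideal.span {σ} ⊔ 𝔞) le_sup_left hI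
  -- Modulo `σ`, the second generator `b₀` may be replaced by an element of `𝔞`.
  obtain ⟨b, hb, hbeq⟩ : ∃ b ∈ 𝔞, Ideal.span {σ} ⊔ Ideal.span {b} = Ideal.span {σ} ⊔ 𝔞 := by
    have hmem : b₀ ∈ Ideal.span {σ} ⊔ 𝔞 :=
      hb₀ ▸ Ideal.mem_sup_right (Ideal.mem_span_singleton_self _)
    obtain ⟨i, hi, b, hb, hib⟩ := Submodule.mem_sup.mp hmem
    refine ⟨b, hb, le_antisymm
      (sup_le_sup_left ((Ideal.span_singleton_le_iff_mem _).mpr hb) _) ?_⟩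
    rw [← hb₀]
    exact sup_le le_sup_left ((Ideal.span_singleton_le_iff_mem _).mpr (Submodule.mem_sup.mpr
      ⟨i, hi, b, Ideal.mem_span_singleton_self _, hib⟩))
  have hgen : Ideal.span {σ} ⊔ Ideal.span {τ'} ⊔ Ideal.span {b} = 𝔯 := by
    rw [sup_right_comm, hbeq, hσσ', sup_right_comm, h]
  obtain ⟨c, hc⟩ := exists_sup_span_add_mul_eq hI hgen
  refine ⟨σ, τ' + c * b, ?_, 𝔯.add_mem hτ' (hle (𝔞.mul_mem_left c hb)), hσ, ?_, hc⟩
  · simpa using 𝔯.add_mem (hle hσ) hσ'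
  · simpa using 𝔞.mul_mem_left c hb
end

section
/- For q ∈ ℕ and T ≥ 1, the integral I_q(T) := ∫ over the region {x_1,…,x_q ≥ 1, x_1⋯x_q < T} of dx_1⋯dx_q satisfies I_q(T) = (−1)^q + Σ_{j=1}^{q} ((−1)^{q−j}/(j−1)!)·T·(log T)^{j−1}. In particular, there is a polynomial P_q(T) ∈ ℚ[T] of degree q−1 with leading coefficient 1/(q−1)! such that I_q(T) = T·P_q(log T) + (−1)^q for all T ≥ 1. -/
/-!
Write `E_q(y) = ∑_{k<q} y ^ k / k!` for the truncated exponential series. The right-hand side of the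
volume formula is `F_q(T) = (-1) ^ q * (1 - T * E_q(-log T))`, the form used throughout: since
the derivative of `E_{q+1}` is `E_q`, the function `t ↦ -t * F_{q+1}(T / t)` is an antiderivative of `t ↦ F_q(T / t)`,
and it vanishes at `t = T` because `F_{q+1}(1) = 0`. Hence `∫_1^T F_q(T / t) dt = F_{q+1}(T)`.

Slicing the `(q+1)`-dimensional region at first coordinate `t` gives the `q`-dimensional region with
parameter `T / t` when `1 ≤ t`, which is empty once `t ≥ T`, so Tonelli's theorem yields the same
recursion for the volumes. Induction from `q = 0` (a point, of volume `1 = F_0(T)` for `T > 1`)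
proves the formula. The recursion also shows `F_q ≥ 0` on `[1, ∞)`, which is what allows its integrals
to be read in `ℝ≥0∞`.
-/

open MeasureTheory

/-- `I_q(T)`: the volume of the hyperbolic region
`{(x_1,…,x_q) ∈ ℝ^q : x_i ≥ 1 ∀ i, x_1⋯x_q < T}`. -/
noncomputable def hypVol (q : ℕ) (T : ℝ) : ℝ :=
  (volume {x : Fin q → ℝ | (∀ i, 1 ≤ x i) ∧ ∏ i, x i < T}).toReal


/-- The truncated exponential series `E_q(y) = ∑_{k<q} y ^ k / k!`. -/
noncomputable def truncExp (q : ℕ) (y : ℝ) : ℝ :=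
  ∑ k ∈ Finset.range q, y ^ k / (Nat.factorial k : ℝ)

lemma truncExp_succ_zero (q : ℕ) : truncExp (q + 1) 0 = 1 := by
  simp [truncExp, Finset.sum_range_succ']

lemma hasDerivAt_truncExp_succ (q : ℕ) (y : ℝ) :
    HasDerivAt (truncExp (q + 1)) (truncExp q y) y := by
  induction q with
  | zero =>
    have h : truncExp (0 + 1) = fun _ => (1 : ℝ) := by
      funext z
      simp [truncExp]
    rw [h]
    simpa [truncExp] using hasDerivAt_const y (1 : ℝ)
  | succ q ih =>
    have h : truncExp (q + 1 + 1) =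
        fun z => truncExp (q + 1) z + z ^ (q + 1) / (Nat.factorial (q + 1) : ℝ) := by
      funext z
      exact Finset.sum_range_succ _ _
    have h2 : truncExp (q + 1) y =
        truncExp q y + ((q + 1 : ℕ) : ℝ) * y ^ q / (Nat.factorial (q + 1) : ℝ) := by
      rw [truncExp, Finset.sum_range_succ, ← truncExp, Nat.factorial_succ]
      push_cast
      have : (Nat.factorial q : ℝ) ≠ 0 := by positivity
      field_simp
    rw [h, h2]
    exact ih.add ((hasDerivAt_pow (q + 1) y).div_const _)

/-- The closed form `F_q(T) = (-1) ^ q * (1 - T * E_q(-log T))` of the volume, valid for `T > 1`, and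
also for `T = 1` when `q ≥ 1`. -/
noncomputable def volForm (q : ℕ) (T : ℝ) : ℝ :=
  (-1) ^ q * (1 - T * truncExp q (-Real.log T))

lemma volForm_succ_one (q : ℕ) : volForm (q + 1) 1 = 0 := by
  simp [volForm, truncExp_succ_zero]

/-- An antiderivative of `t ↦ F_q(T / t)`; for `s > 0` the function on the left is
`-s * F_{q+1}(T / s)`. -/
lemma hasDerivAt_volForm_div (q : ℕ) {T t : ℝ} (hT : 0 < T) (ht : 0 < t) :
    HasDerivAt (fun s => (-1 : ℝ) ^ q * (s - T * truncExp (q + 1) (Real.log s - Real.log T)))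
      (volForm q (T / t)) t := by
  have h1 : HasDerivAt (fun s => Real.log s - Real.log T) t⁻¹ t :=
    (Real.hasDerivAt_log ht.ne').sub_const _
  have h2 := (hasDerivAt_truncExp_succ q (Real.log t - Real.log T)).comp t h1
  have h3 := ((hasDerivAt_id t).sub (h2.const_mul T)).const_mul ((-1 : ℝ) ^ q)
  refine h3.congr_deriv ?_
  rw [volForm, Real.log_div hT.ne' ht.ne', neg_sub]
  ring

lemma continuousOn_volForm_div (q : ℕ) {T : ℝ} (hT : 1 ≤ T) :
    ContinuousOn (fun t => volForm q (T / t)) (Set.Icc 1 T) := by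
  have hne : ∀ t ∈ Set.Icc 1 T, t ≠ 0 := fun t ht => by linarith [ht.1]
  have hdiv : ContinuousOn (fun t : ℝ => T / t) (Set.Icc 1 T) :=
    continuousOn_const.div continuousOn_id hne
  have hlog : ContinuousOn (fun t : ℝ => Real.log (T / t)) (Set.Icc 1 T) :=
    hdiv.log fun t ht => div_ne_zero (by linarith) (hne t ht)
  unfold volForm truncExp
  fun_prop

lemma integral_volForm_div (q : ℕ) {T : ℝ} (hT : 1 ≤ T) :
    ∫ t in (1 : ℝ)..T, volForm q (T / t) = volForm (q + 1) T := by
  rw [intervalIntegral.integral_eq_sub_of_hasDerivAt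
    (f := fun s => (-1 : ℝ) ^ q * (s - T * truncExp (q + 1) (Real.log s - Real.log T)))]
  · simp only [sub_self, truncExp_succ_zero, Real.log_one, zero_sub, volForm]
    ring
  · intro t ht
    rw [Set.uIcc_of_le hT] at ht
    exact hasDerivAt_volForm_div q (by linarith) (by linarith [ht.1])
  · apply ContinuousOn.intervalIntegrable
    rw [Set.uIcc_of_le hT]
    exact continuousOn_volForm_div q hT

lemma volForm_nonneg (q : ℕ) : ∀ T : ℝ, 1 ≤ T → 0 ≤ volForm q T := by
  induction q with
  | zero => intro T _; simp [volForm, truncExp]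
  | succ q ih =>
    intro T hT
    rw [← integral_volForm_div q hT]
    refine intervalIntegral.integral_nonneg hT fun t ht => ih _ ?_
    rw [le_div_iff₀ (by linarith [ht.1])]
    linarith [ht.2]

/-- The region `{x ∈ ℝ^q : x_i ≥ 1 for all i, x_1 ⋯ x_q < T}`. -/
def hypRegion (q : ℕ) (T : ℝ) : Set (Fin q → ℝ) :=
  {x | (∀ i, 1 ≤ x i) ∧ ∏ i, x i < T}

lemma measurableSet_hypRegion (q : ℕ) (T : ℝ) : MeasurableSet (hypRegion q T) := by
  unfold hypRegion
  refine MeasurableSet.inter (s₁ := {x : Fin q → ℝ | ∀ i, 1 ≤ x i})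
    (s₂ := {x : Fin q → ℝ | ∏ i, x i < T}) ?_ ?_
  · rw [Set.ofPred_forall]
    exact MeasurableSet.iInter fun i => measurableSet_le measurable_const (measurable_pi_apply i)
  · exact measurableSet_lt (by fun_prop) measurable_const

lemma hypRegion_eq_empty (q : ℕ) {T : ℝ} (hT : T ≤ 1) : hypRegion q T = ∅ := by
  refine Set.eq_empty_of_forall_notMem fun x hx => ?_
  have : (1 : ℝ) ≤ ∏ i, x i := Finset.one_le_prod fun i _ => hx.1 i
  linarith [hx.2]

lemma cons_mem_hypRegion (q : ℕ) (T t : ℝ) (y : Fin q → ℝ) :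
    (Fin.cons t y : Fin (q + 1) → ℝ) ∈ hypRegion (q + 1) T ↔
      1 ≤ t ∧ y ∈ hypRegion q (T / t) := by
  simp only [hypRegion, Set.mem_ofPred_eq, Fin.forall_fin_succ, Fin.cons_zero, Fin.cons_succ,
    Fin.prod_univ_succ, and_assoc]
  refine and_congr_right fun ht => and_congr_right fun _ => ?_
  rw [lt_div_iff₀ (by linarith), mul_comm]

/-- Tonelli's theorem for the first coordinate: slices at `t < 1` or `t ≥ T` are empty. -/
lemma volume_hypRegion_succ (q : ℕ) (T : ℝ) :
    volume (hypRegion (q + 1) T) = ∫⁻ t in Set.Ioo 1 T, volume (hypRegion q (T / t)) := by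
  have hmp := (volume_preserving_piFinSuccAbove (fun _ : Fin (q + 1) => ℝ) 0).symm
  rw [← hmp.measure_preimage_equiv, Measure.volume_eq_prod,
    Measure.prod_apply ((MeasurableEquiv.measurable _) (measurableSet_hypRegion _ _)),
    setLIntegral_congr Ioo_ae_eq_Ico, ← lintegral_indicator measurableSet_Ico]
  refine lintegral_congr fun t => ?_
  have hpre : Prod.mk t ⁻¹' ((MeasurableEquiv.piFinSuccAbove (fun _ : Fin (q + 1) => ℝ) 0).symm ⁻¹'
      hypRegion (q + 1) T) = {y | 1 ≤ t ∧ y ∈ hypRegion q (T / t)} := by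
    ext y
    rw [Set.mem_ofPred_eq, ← cons_mem_hypRegion]
    simp [MeasurableEquiv.piFinSuccAbove, Fin.insertNthEquiv]
  rw [hpre]
  by_cases h1 : 1 ≤ t
  · by_cases h2 : t < T
    · simp [h1, h2]
    · rw [Set.indicator_of_notMem (by simp [h2]), hypRegion_eq_empty q]
      · simp
      · rw [div_le_one (by linarith)]
        exact not_lt.mp h2
  · simp [h1]

lemma volume_hypRegion (q : ℕ) :
    ∀ T : ℝ, 1 < T → volume (hypRegion q T) = ENNReal.ofReal (volForm q T) := by
  induction q with
  | zero =>
    intro T hT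
    have h : hypRegion 0 T = Set.univ := by
      ext x
      simp [hypRegion, hT]
    rw [h]
    simp [volForm, truncExp, volume_pi]
  | succ q ih =>
    intro T hT
    have hmem : ∀ t ∈ Set.Ioo 1 T, 1 < T / t := fun t ht => by
      rw [lt_div_iff₀ (by linarith [ht.1])]
      linarith [ht.2]
    rw [volume_hypRegion_succ, setLIntegral_congr_fun measurableSet_Ioo
      fun t ht => ih _ (hmem t ht), ← integral_volForm_div q hT.le,
      intervalIntegral.integral_of_le hT.le, integral_Ioc_eq_integral_Ioo,
      ofReal_integral_eq_lintegral_ofReal]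
    · exact ((continuousOn_volForm_div q hT.le).integrableOn_Icc).mono_set Set.Ioo_subset_Icc_self
    · exact (ae_restrict_iff' measurableSet_Ioo).2
        (ae_of_all _ fun t ht => volForm_nonneg q _ (hmem t ht).le)

/-- The case `T = 1` needs positive dimension: `F_0(1) = 1`, while the region is empty. -/
lemma hypVol_succ (n : ℕ) {T : ℝ} (hT : 1 ≤ T) : hypVol (n + 1) T = volForm (n + 1) T := by
  change (volume (hypRegion (n + 1) T)).toReal = _
  rcases hT.eq_or_lt with rfl | h
  · rw [hypRegion_eq_empty _ le_rfl, volForm_succ_one]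
    simp
  · rw [volume_hypRegion _ _ h, ENNReal.toReal_ofReal (volForm_nonneg _ _ hT)]

/-- The polynomial `P_{n+1} = (-1) ^ n * E_{n+1}(-X)`. -/
noncomputable def volPoly (n : ℕ) : Polynomial ℚ :=
  ∑ k ∈ Finset.range (n + 1),
    Polynomial.C ((-1 : ℚ) ^ n * (-1) ^ k / (Nat.factorial k : ℚ)) * Polynomial.X ^ k

lemma coeff_volPoly (n : ℕ) : (volPoly n).coeff n = 1 / (Nat.factorial n : ℚ) := by
  simp [volPoly, Polynomial.finsetSum_coeff, Polynomial.coeff_C_mul, Polynomial.coeff_X_pow,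
    ← mul_pow]

lemma degree_volPoly (n : ℕ) : (volPoly n).degree = n := by
  refine le_antisymm ?_ (Polynomial.le_degree_of_ne_zero ?_)
  · refine (Polynomial.degree_sum_le _ _).trans (Finset.sup_le fun k hk => ?_)
    refine (Polynomial.degree_C_mul_X_pow_le _ _).trans ?_
    exact_mod_cast Nat.lt_succ_iff.mp (Finset.mem_range.mp hk)
  · rw [coeff_volPoly]
    positivity

lemma eval_volPoly (n : ℕ) (y : ℝ) :
    ((volPoly n).map (algebraMap ℚ ℝ)).eval y = (-1) ^ n * truncExp (n + 1) (-y) := by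
  simp only [volPoly, truncExp, Polynomial.map_sum, Polynomial.eval_finsetSum,
    Finset.mul_sum]
  refine Finset.sum_congr rfl fun k _ => ?_
  simp [neg_pow y k]
  ring

/-- For `q ∈ ℕ` and `T ≥ 1`,
`I_q(T) = (−1)^q + ∑_{j=1}^q ((−1)^{q−j}/(j−1)!) T (log T)^{j−1}`; in particular there is a
polynomial `P_q ∈ ℚ[T]` of degree `q−1` with leading coefficient `1/(q−1)!` such that
`I_q(T) = T·P_q(log T) + (−1)^q` for all `T ≥ 1`. -/
theorem hypVol_eq (q : ℕ) (hq : 1 ≤ q) :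
    (∀ T : ℝ, 1 ≤ T →
      hypVol q T = (-1 : ℝ) ^ q +
        ∑ j ∈ Finset.Icc 1 q,
          ((-1 : ℝ) ^ (q - j) / (Nat.factorial (j - 1) : ℝ)) * T * Real.log T ^ (j - 1)) ∧
    ∃ P : Polynomial ℚ, P.degree = (q - 1 : ℕ) ∧
      P.leadingCoeff = 1 / (Nat.factorial (q - 1) : ℚ) ∧
      ∀ T : ℝ, 1 ≤ T →
        hypVol q T = T * (P.map (algebraMap ℚ ℝ)).eval (Real.log T) + (-1 : ℝ) ^ q := by
  obtain ⟨n, rfl⟩ : ∃ n, q = n + 1 := ⟨q - 1, by omega⟩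
  refine ⟨fun T hT => ?_, volPoly n, ?_, ?_, fun T hT => ?_⟩
  · rw [hypVol_succ n hT, volForm, mul_sub, mul_one, sub_eq_add_neg, truncExp]
    congr 1
    rw [Finset.range_eq_Ico, ← Finset.Ico_add_one_right_eq_Icc, ← Finset.sum_Ico_add' _ 0 (n + 1) 1]
    simp only [Nat.add_sub_add_right, Nat.add_sub_cancel, Finset.mul_sum, ← Finset.sum_neg_distrib]
    refine Finset.sum_congr rfl fun k hk => ?_
    -- `(-1) ^ (n - k) = (-1) ^ (n + k)` because `k ≤ n`.
    have hsign : (-1 : ℝ) ^ n * (-1) ^ k = (-1) ^ (n - k) := by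
      obtain ⟨m, rfl⟩ := Nat.exists_eq_add_of_le (Nat.lt_succ_iff.mp (Finset.mem_Ico.mp hk |>.2))
      rw [Nat.add_sub_cancel_left, pow_add, mul_right_comm, ← mul_pow]
      simp
    rw [← hsign, neg_pow (Real.log T) k]
    ring
  · simpa using degree_volPoly n
  · rw [Polynomial.leadingCoeff, Polynomial.natDegree_eq_of_degree_eq_some (degree_volPoly n),
      coeff_volPoly, Nat.add_sub_cancel]
  · rw [hypVol_succ n hT, volForm, eval_volPoly]
    ring
end
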